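/- Poincaré-type inequality: Suppose Q(u) ≥ 0 for every u ∈ C_c^∞(Ω) and Q admits a ground state v. Then there exists a continuous function W : Ω → ℝ with W > 0 everywhere such that for every ψ ∈ C_c^∞(Ω) satisfying ∫_Ω ψ v dx ≠ 0 there exists a constant C > 0 such that C^{−1} ∫_Ω W|u|^p dx ≤ Q(u) + C |∫_Ω u ψ dx|^p for all u ∈ C_c^∞(Ω). -/

import Mathlib

/-!
A ground state `v` is a weak solution of `Q'(v) = 0`. Indeed, patch a competitor `f` that agrees
with `v` near the boundary of a compact set into the null sequence with weight `|η| ^ p`.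
Convexity of `‖·‖ ^ p` bounds the change of energy by quantities that pass to the limit, and
`Q ≥ 0` forces the limiting change to be nonnegative, so `v` minimizes the energy among its
compact perturbations.

For a positive supersolution `v`, Picone's identity bounds `Q(u)` from below by the integral of the
convexity gap of `‖·‖ ^ p` between `(u / v) ∇v` and `∇u`. This gap controls `|∇(u / v)| ^ p` up to
an arbitrarily small multiple of `|u / v| ^ p`. On a connected finite union of balls, `u / v` is
then close to a constant, the constant is controlled by `∫ u ψ = ∫ (u / v) v ψ` because
`∫ ψ v ≠ 0`, and the small multiple is absorbed. This gives
`∫_K |u| ^ p ≤ C_K (Q(u) + |∫ u ψ| ^ p)` for compact `K`. Summing over an exhaustion produces the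
weight for one fixed `ψ₀`; the same estimate on the support of `ψ₀` replaces `|∫ u ψ₀| ^ p` by
`Q(u) + |∫ u ψ| ^ p` for every other `ψ`.
-/

open MeasureTheory Filter
open scoped RealInnerProductSpace Topology

noncomputable section

/-- Euclidean space `ℝ^d`. -/
abbrev Euc (d : ℕ) := EuclideanSpace ℝ (Fin d)

/-- A test function on `Ω`: smooth with compact support contained in `Ω`. -/
def IsTestFun {d : ℕ} (Ω : Set (Euc d)) (u : Euc d → ℝ) : Prop :=
  ContDiff ℝ (⊤ : ℕ∞) u ∧ HasCompactSupport u ∧ tsupport u ⊆ Ω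

/-- The energy functional `Q(u) = ∫_Ω (|∇u|^p + V |u|^p) dx`. -/
def energyQ {d : ℕ} (Ω : Set (Euc d)) (V : Euc d → ℝ) (p : ℝ) (u : Euc d → ℝ) : ℝ :=
  ∫ x in Ω, (‖gradient u x‖ ^ p + V x * |u x| ^ p)

/-- `V` is measurable and bounded on every compact subset of `Ω`. -/
def LocBddPotential {d : ℕ} (Ω : Set (Euc d)) (V : Euc d → ℝ) : Prop :=
  Measurable V ∧ ∀ K : Set (Euc d), K ⊆ Ω → IsCompact K → ∃ C : ℝ, ∀ x ∈ K, |V x| ≤ C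

/-- A positive supersolution of `Q'(u) = 0` in `Ω`. -/
def IsPositiveSupersolution {d : ℕ} (Ω : Set (Euc d)) (V : Euc d → ℝ) (p : ℝ)
    (v : Euc d → ℝ) : Prop :=
  ContDiffOn ℝ 1 v Ω ∧ (∀ x ∈ Ω, 0 < v x) ∧
    ∀ φ : Euc d → ℝ, IsTestFun Ω φ → (∀ x, 0 ≤ φ x) →
      0 ≤ ∫ x in Ω, (‖gradient v x‖ ^ (p - 2) * ⟪gradient v x, gradient φ x⟫
            + V x * v x ^ (p - 1) * φ x)

/-- A positive (weak) solution of `Q'(u) = 0` in `Ω`. -/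
def IsPositiveSolution {d : ℕ} (Ω : Set (Euc d)) (V : Euc d → ℝ) (p : ℝ)
    (v : Euc d → ℝ) : Prop :=
  ContDiffOn ℝ 1 v Ω ∧ (∀ x ∈ Ω, 0 < v x) ∧
    ∀ φ : Euc d → ℝ, IsTestFun Ω φ →
      (∫ x in Ω, (‖gradient v x‖ ^ (p - 2) * ⟪gradient v x, gradient φ x⟫
            + V x * v x ^ (p - 1) * φ x)) = 0

/-- A null sequence for the functional `Q`. -/
def IsNullSequence {d : ℕ} (Ω : Set (Euc d)) (V : Euc d → ℝ) (p : ℝ)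
    (u : ℕ → Euc d → ℝ) : Prop :=
  (∀ k, IsTestFun Ω (u k)) ∧ (∀ k x, 0 ≤ u k x) ∧
    ∃ B : Set (Euc d), IsOpen B ∧ IsCompact (closure B) ∧ closure B ⊆ Ω ∧
      (∀ k, (∫ x in B, u k x ^ p) = 1) ∧
      Tendsto (fun k => energyQ Ω V p (u k)) atTop (𝓝 0)

/-- A ground state of `Q`: a positive `C¹` function on `Ω` which is the limit in
`L^p_loc(Ω)` of a null sequence. -/
def IsGroundState {d : ℕ} (Ω : Set (Euc d)) (V : Euc d → ℝ) (p : ℝ)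
    (v : Euc d → ℝ) : Prop :=
  ContDiffOn ℝ 1 v Ω ∧ (∀ x ∈ Ω, 0 < v x) ∧
    ∃ u : ℕ → Euc d → ℝ, IsNullSequence Ω V p u ∧
      ∀ K : Set (Euc d), K ⊆ Ω → IsCompact K →
        Tendsto (fun k => ∫ x in K, |u k x - v x| ^ p) atTop (𝓝 0)

/-- `Q` has a weighted spectral gap (is strictly positive) in `Ω`. -/
def HasSpectralGap {d : ℕ} (Ω : Set (Euc d)) (V : Euc d → ℝ) (p : ℝ) : Prop :=
  ∃ W : Euc d → ℝ, ContinuousOn W Ω ∧ (∀ x ∈ Ω, 0 < W x) ∧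
    ∀ u : Euc d → ℝ, IsTestFun Ω u → (∫ x in Ω, W x * |u x| ^ p) ≤ energyQ Ω V p u

/-- `c_B`: the infimum of `Q(u)` over test functions with `∫_B |u|^p = 1`. -/
def cB {d : ℕ} (Ω B : Set (Euc d)) (V : Euc d → ℝ) (p : ℝ) : ℝ :=
  sInf { q : ℝ | ∃ u : Euc d → ℝ, IsTestFun Ω u ∧ (∫ x in B, |u x| ^ p) = 1 ∧
    q = energyQ Ω V p u }

/-- The Picone Lagrangian `L(u,v)`. -/
def piconeL {d : ℕ} (p : ℝ) (u v : Euc d → ℝ) (x : Euc d) : ℝ :=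
  ‖gradient u x‖ ^ p + (p - 1) * (u x / v x) ^ p * ‖gradient v x‖ ^ p
    - p * (u x / v x) ^ (p - 1) *
        (‖gradient v x‖ ^ (p - 2) * ⟪gradient u x, gradient v x⟫)

/-! ### The function `‖·‖ ^ p` -/

lemma norm_add_rpow_le {E : Type*} [SeminormedAddCommGroup E] {p : ℝ} (hp : 1 ≤ p) (a b : E) :
    ‖a + b‖ ^ p ≤ 2 ^ (p - 1) * (‖a‖ ^ p + ‖b‖ ^ p) := by
  have h := (NNReal.rpow_add_le_mul_rpow_add_rpow ‖a‖₊ ‖b‖₊ hp)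
  calc ‖a + b‖ ^ p ≤ (‖a‖ + ‖b‖) ^ p := by gcongr; exact norm_add_le a b
    _ ≤ _ := by exact_mod_cast h

lemma norm_prod_rpow_le {X Y : Type*} [NormedAddCommGroup X] [NormedAddCommGroup Y] (p : ℝ)
    (z : X × Y) :
    ‖z‖ ^ p ≤ ‖z.1‖ ^ p + ‖z.2‖ ^ p := by
  rw [Prod.norm_def]
  rcases max_choice ‖z.1‖ ‖z.2‖ with h | h <;> rw [h]
  · exact le_add_of_nonneg_right (by positivity)
  · exact le_add_of_nonneg_left (by positivity)

section NormRpow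

variable {E : Type*} [NormedAddCommGroup E] [InnerProductSpace ℝ E] {p : ℝ}

/-- The field `a ↦ ‖a‖ ^ (p - 2) • a`, that is `p⁻¹` times the gradient of `‖·‖ ^ p`: evaluated at
`∇v` it is the flux whose divergence is the `p`-Laplacian of `v`. -/
def pFlux (p : ℝ) (a : E) : E := ‖a‖ ^ (p - 2) • a

/-- The gap between `‖·‖ ^ p` and its first-order expansion at `a`, in the direction `b`. It is the
integrand by which Picone's identity bounds the energy from below. -/
def convexityDefect (p : ℝ) (a b : E) : ℝ := ‖a + b‖ ^ p - ‖a‖ ^ p - p * ⟪pFlux p a, b⟫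

lemma inner_pFlux_left (p : ℝ) (a b : E) : ⟪pFlux p a, b⟫ = ‖a‖ ^ (p - 2) * ⟪a, b⟫ := by
  simp [pFlux, inner_smul_left]

lemma inner_pFlux_self (hp : p ≠ 0) (a : E) : ⟪pFlux p a, a⟫ = ‖a‖ ^ p := by
  rw [inner_pFlux_left, real_inner_self_eq_norm_sq, ← Real.rpow_natCast,
    ← Real.rpow_add' (norm_nonneg a) (by simpa using hp)]
  simp

lemma pFlux_smul (p s : ℝ) (a : E) : pFlux p (s • a) = pFlux p s • pFlux p a := by
  simp only [pFlux, norm_smul, Real.mul_rpow (norm_nonneg s) (norm_nonneg a), smul_smul,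
    smul_eq_mul]
  ring_nf

lemma pFlux_mul_self (hp : p ≠ 0) (s : ℝ) : pFlux p s * s = |s| ^ p := by
  simpa [mul_comm] using inner_pFlux_self hp s

lemma pFlux_of_pos (p : ℝ) {s : ℝ} (hs : 0 < s) : pFlux p s = s ^ (p - 1) := by
  rw [pFlux, smul_eq_mul, Real.norm_of_nonneg hs.le, ← Real.rpow_add_one hs.ne']
  ring_nf

lemma hasFDerivAt_norm_rpow_pFlux (hp : 1 < p) (a : E) :
    HasFDerivAt (fun x : E => ‖x‖ ^ p) (p • innerSL ℝ (pFlux p a)) a := by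
  simpa [pFlux, smul_smul] using hasFDerivAt_norm_rpow a hp

lemma hasDerivAt_abs_rpow_pFlux (hp : 1 < p) (s : ℝ) :
    HasDerivAt (fun t : ℝ => |t| ^ p) (p * pFlux p s) s := by
  simpa [pFlux, mul_assoc] using hasDerivAt_abs_rpow s hp

lemma hasDerivAt_norm_add_smul_rpow (hp : 1 < p) (a b : E) (t : ℝ) :
    HasDerivAt (fun t : ℝ => ‖a + t • b‖ ^ p) (p * ⟪pFlux p (a + t • b), b⟫) t := by
  have line : HasDerivAt (fun t : ℝ => a + t • b) b t := by
    simpa using ((hasDerivAt_id t).smul_const b).const_add a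
  simpa [Function.comp_def] using
    (hasFDerivAt_norm_rpow_pFlux hp (a + t • b)).comp_hasDerivAt t line

lemma norm_pFlux (hp : p ≠ 1) (a : E) : ‖pFlux p a‖ = ‖a‖ ^ (p - 1) := by
  rw [pFlux, norm_smul, Real.norm_of_nonneg (by positivity),
    ← Real.rpow_add_one' (norm_nonneg a) (by contrapose! hp; linarith)]
  ring_nf

lemma continuous_pFlux (hp : 1 < p) : Continuous (pFlux p : E → E) := by
  refine continuous_iff_continuousAt.2 fun a => ?_
  by_cases ha : a = 0
  · have lim : Tendsto (fun b : E => ‖b‖ ^ (p - 1)) (𝓝 a) (𝓝 0) := by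
      have h := (continuous_norm.rpow_const fun b : E => Or.inr (sub_pos.2 hp).le).tendsto a
      simpa [ha, Real.zero_rpow (sub_pos.2 hp).ne'] using h
    rw [ContinuousAt, show pFlux p a = 0 by simp [pFlux, ha]]
    exact squeeze_zero_norm (fun b => (norm_pFlux hp.ne' b).le) lim
  · exact (continuous_norm.continuousAt.rpow_const (Or.inl (norm_ne_zero_iff.2 ha))).smul
      continuousAt_id

lemma strictConvexOn_norm_rpow (hp : 1 < p) : StrictConvexOn ℝ Set.univ fun x : E => ‖x‖ ^ p := by
  refine ⟨convex_univ, fun x _ y _ hxy s t hs ht hst => ?_⟩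
  by_cases hn : ‖x‖ = ‖y‖
  · have hlt := norm_combo_lt_of_ne hn.le le_rfl hxy hs ht hst
    calc ‖s • x + t • y‖ ^ p < ‖y‖ ^ p :=
          Real.rpow_lt_rpow (norm_nonneg _) hlt (zero_lt_one.trans hp)
      _ = s • ‖x‖ ^ p + t • ‖y‖ ^ p := by rw [hn, ← add_smul, hst, one_smul]
  · have hle : ‖s • x + t • y‖ ≤ s • ‖x‖ + t • ‖y‖ :=
      convexOn_univ_norm.2 (Set.mem_univ x) (Set.mem_univ y) hs.le ht.le hst
    exact (Real.rpow_le_rpow (norm_nonneg _) hle (zero_lt_one.trans hp).le).trans_lt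
      ((strictConvexOn_rpow hp).2 (norm_nonneg x) (norm_nonneg y) hn hs ht hst)

lemma convexityDefect_zero_right (p : ℝ) (a : E) : convexityDefect p a 0 = 0 := by
  simp [convexityDefect]

lemma convexityDefect_pos (hp : 1 < p) (a : E) {b : E} (hb : b ≠ 0) :
    0 < convexityDefect p a b := by
  have convex : StrictConvexOn ℝ Set.univ fun t : ℝ => ‖a + t • b‖ ^ p := by
    refine ⟨convex_univ, fun s _ t _ hst α β hα hβ hαβ => ?_⟩
    have hne : a + s • b ≠ a + t • b := by simpa [hb] using hst
    have combo : a + (α • s + β • t) • b = α • (a + s • b) + β • (a + t • b) := by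
      calc a + (α • s + β • t) • b = (α + β) • a + (α • s + β • t) • b := by rw [hαβ, one_smul]
        _ = α • (a + s • b) + β • (a + t • b) := by simp only [smul_eq_mul]; module
    simpa only [combo] using (strictConvexOn_norm_rpow hp).2 trivial trivial hne hα hβ hαβ
  have h := convex.lt_slope_of_hasDerivAt trivial trivial zero_lt_one
    (hasDerivAt_norm_add_smul_rpow hp a b 0)
  simp only [slope_def_field, one_smul, zero_smul, add_zero, sub_zero, div_one] at h
  exact sub_pos.2 h

lemma convexityDefect_nonneg (hp : 1 < p) (a b : E) : 0 ≤ convexityDefect p a b := by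
  obtain rfl | hb := eq_or_ne b 0
  · exact (convexityDefect_zero_right p a).ge
  · exact (convexityDefect_pos hp a hb).le

lemma continuous_convexityDefect (hp : 1 < p) :
    Continuous fun z : E × E => convexityDefect p z.1 z.2 := by
  have hp' : 0 ≤ p := (zero_lt_one.trans hp).le
  have flux : Continuous fun z : E × E => pFlux p z.1 := (continuous_pFlux hp).comp continuous_fst
  exact (((continuous_fst.add continuous_snd).norm.rpow_const fun _ => Or.inr hp').sub
    (continuous_fst.norm.rpow_const fun _ => Or.inr hp')).sub
    ((flux.inner continuous_snd).const_mul p)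

lemma convexityDefect_smul {s : ℝ} (hs : 0 ≤ s) (hp : p ≠ 0) (a b : E) :
    convexityDefect p (s • a) (s • b) = s ^ p * convexityDefect p a b := by
  have h : pFlux p s * s = s ^ p := by rw [pFlux_mul_self hp, abs_of_nonneg hs]
  rw [convexityDefect, ← smul_add, pFlux_smul, inner_smul_left, inner_smul_right]
  simp only [norm_smul, Real.norm_of_nonneg hs, Real.mul_rpow hs (norm_nonneg _),
    RCLike.conj_to_real, convexityDefect, ← h]
  ring

end NormRpow

section Homogeneous

lemma exists_forall_le_add_mul_of_isCompact {X : Type*} [TopologicalSpace X] {S : Set X}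
    (hS : IsCompact S) {F G : X → ℝ} (hF : Continuous F) (hG : Continuous G) (hG₀ : ∀ z, 0 ≤ G z)
    {ε : ℝ} (hFG : ∀ z, G z = 0 → F z < ε) : ∃ C > 0, ∀ z ∈ S, F z ≤ ε + C * G z := by
  let U : ℕ → Set X := fun n => {z | F z < ε + n * G z}
  have cover : S ⊆ ⋃ n, U n := fun z _ => by
    obtain hz | hz := (hG₀ z).eq_or_lt
    · exact Set.mem_iUnion.2 ⟨0, by simpa [U] using hFG z hz.symm⟩
    · obtain ⟨n, hn⟩ := exists_nat_gt ((F z - ε) / G z)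
      exact Set.mem_iUnion.2 ⟨n, by simpa [U] using sub_lt_iff_lt_add'.1 ((div_lt_iff₀ hz).1 hn)⟩
  have mono : Monotone U := fun m n hmn z (hz : F z < ε + m * G z) =>
    hz.trans_le (by have := hG₀ z; gcongr)
  obtain ⟨n, hn⟩ := hS.elim_directed_cover U
    (fun n => isOpen_lt hF (continuous_const.add (continuous_const.mul hG))) cover mono.directed_le
  exact ⟨n + 1, by positivity, fun z hz => (hn hz).le.trans <| by nlinarith [hG₀ z]⟩

variable {X : Type*} [NormedAddCommGroup X] [NormedSpace ℝ X] [ProperSpace X] {p : ℝ}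

lemma exists_forall_le_mul_norm_rpow_add (hp : p ≠ 0) {F G : X → ℝ}
    (hF : Continuous F) (hG : Continuous G)
    (hF_smul : ∀ s : ℝ, 0 ≤ s → ∀ z, F (s • z) = s ^ p * F z)
    (hG_smul : ∀ s : ℝ, 0 ≤ s → ∀ z, G (s • z) = s ^ p * G z)
    (hG₀ : ∀ z, 0 ≤ G z) (hFG : ∀ z, G z = 0 → F z ≤ 0) {ε : ℝ} (hε : 0 < ε) :
    ∃ C > 0, ∀ z, F z ≤ ε * ‖z‖ ^ p + C * G z := by
  obtain ⟨C, hC, bound⟩ := exists_forall_le_add_mul_of_isCompact (isCompact_sphere (0 : X) 1)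
    hF hG hG₀ fun z hz => (hFG z hz).trans_lt hε
  refine ⟨C, hC, fun z => ?_⟩
  obtain rfl | hz := eq_or_ne z 0
  · have hF_zero : F 0 = 0 := by simpa [Real.zero_rpow hp] using hF_smul 0 le_rfl 0
    have := hG₀ 0
    rw [hF_zero]
    positivity
  · have unit : ‖z‖⁻¹ • z ∈ Metric.sphere (0 : X) 1 := by
      simp [norm_smul, inv_mul_cancel₀ (norm_ne_zero_iff.2 hz)]
    have hz' : z = ‖z‖ • ‖z‖⁻¹ • z := (smul_inv_smul₀ (norm_ne_zero_iff.2 hz) z).symm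
    calc F z = ‖z‖ ^ p * F (‖z‖⁻¹ • z) := by rw [← hF_smul _ (norm_nonneg z), ← hz']
      _ ≤ ‖z‖ ^ p * (ε + C * G (‖z‖⁻¹ • z)) := by gcongr; exact bound _ unit
      _ = ε * ‖z‖ ^ p + C * (‖z‖ ^ p * G (‖z‖⁻¹ • z)) := by ring
      _ = ε * ‖z‖ ^ p + C * G z := by rw [← hG_smul _ (norm_nonneg z), ← hz']

lemma exists_abs_norm_rpow_sub_norm_rpow_le (hp : 0 < p) {ε : ℝ} (hε : 0 < ε) :
    ∃ C > 0, ∀ a b : X, |‖b‖ ^ p - ‖a‖ ^ p| ≤ ε * ‖a‖ ^ p + C * ‖b - a‖ ^ p := by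
  have hc {f : X × X → X} (hf : Continuous f) : Continuous fun z => ‖f z‖ ^ p :=
    hf.norm.rpow_const fun _ => Or.inr hp.le
  obtain ⟨C, hC, bound⟩ := exists_forall_le_mul_norm_rpow_add (X := X × X) hp.ne'
    (F := fun z => |‖z.1 + z.2‖ ^ p - ‖z.1‖ ^ p|) (G := fun z => ‖z.2‖ ^ p)
    ((hc (continuous_fst.add continuous_snd)).sub (hc continuous_fst)).abs (hc continuous_snd)
    (fun s hs z => by
      simp only [Prod.smul_fst, Prod.smul_snd, ← smul_add, norm_smul, Real.norm_of_nonneg hs,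
        Real.mul_rpow hs (norm_nonneg _), ← mul_sub, abs_mul,
        abs_of_nonneg (Real.rpow_nonneg hs p)])
    (fun s hs z => by
      simp only [Prod.smul_snd, norm_smul, Real.norm_of_nonneg hs,
        Real.mul_rpow hs (norm_nonneg _)])
    (fun z => by positivity)
    (fun z hz => by
      have : z.2 = 0 := norm_eq_zero.1 ((Real.rpow_eq_zero (norm_nonneg _) hp.ne').1 hz)
      simp [this])
    hε
  refine ⟨ε + C, by positivity, fun a b => ?_⟩
  have h := bound (a, b - a)
  have h' := mul_le_mul_of_nonneg_left (norm_prod_rpow_le p (a, b - a)) hε.le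
  simp only [add_sub_cancel] at h h'
  linarith

lemma exists_norm_rpow_le_add_mul_convexityDefect {E : Type*} [NormedAddCommGroup E]
    [InnerProductSpace ℝ E] [ProperSpace E] (hp : 1 < p) {ε : ℝ} (hε : 0 < ε) :
    ∃ C > 0, ∀ a b : E, ‖b‖ ^ p ≤ ε * ‖a‖ ^ p + C * convexityDefect p a b := by
  have hp₀ : 0 < p := zero_lt_one.trans hp
  set δ := ε / (1 + ε)
  obtain ⟨C, hC, bound⟩ := exists_forall_le_mul_norm_rpow_add (X := E × E) hp₀.ne'
    (F := fun z => ‖z.2‖ ^ p) (G := fun z => convexityDefect p z.1 z.2)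
    (continuous_snd.norm.rpow_const fun _ => Or.inr hp₀.le) (continuous_convexityDefect hp)
    (fun s hs z => by
      simp only [Prod.smul_snd, norm_smul, Real.norm_of_nonneg hs,
        Real.mul_rpow hs (norm_nonneg _)])
    (fun s hs z => convexityDefect_smul hs hp₀.ne' z.1 z.2)
    (fun z => convexityDefect_nonneg hp z.1 z.2)
    (fun z hz => by
      have : z.2 = 0 := by
        contrapose! hz
        exact (convexityDefect_pos hp z.1 hz).ne'
      simp [this, Real.zero_rpow hp₀.ne'])
    (show 0 < δ by positivity)
  refine ⟨(1 + ε) * C, by positivity, fun a b => ?_⟩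
  have h := (bound (a, b)).trans (add_le_add_left (mul_le_mul_of_nonneg_left
    (norm_prod_rpow_le p (a, b)) (by positivity : 0 ≤ δ)) _)
  have hδ : (1 + ε) * δ = ε := by simp only [δ]; field_simp
  have h' := mul_le_mul_of_nonneg_left h (by positivity : 0 ≤ 1 + ε)
  simp only at h'
  linear_combination h' + (‖a‖ ^ p + ‖b‖ ^ p) * hδ

end Homogeneous

/-! ### Integrals of `p`-th powers -/

section IntegralRpow

variable {α : Type*} {_ : MeasurableSpace α} {μ : Measure α} {p : ℝ}

lemma rpow_integral_norm_le [IsFiniteMeasure μ] {F : Type*} [NormedAddCommGroup F] (hp : 1 ≤ p)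
    {f : α → F} (hf : Integrable f μ) (hfp : Integrable (fun x => ‖f x‖ ^ p) μ) :
    (∫ x, ‖f x‖ ∂μ) ^ p ≤ μ.real Set.univ ^ (p - 1) * ∫ x, ‖f x‖ ^ p ∂μ := by
  obtain rfl | hμ := eq_or_ne μ 0
  · simp [Real.zero_rpow (zero_lt_one.trans_le hp).ne']
  have : NeZero μ := ⟨hμ⟩
  have hm : 0 < μ.real Set.univ := by simp [measureReal_def, ENNReal.toReal_pos_iff, hμ]
  have jensen : (⨍ x, ‖f x‖ ∂μ) ^ p ≤ ⨍ x, ‖f x‖ ^ p ∂μ :=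
    (convexOn_rpow hp).map_average_le
      (Real.continuous_rpow_const (zero_le_one.trans hp)).continuousOn isClosed_Ici
      (Eventually.of_forall fun x => norm_nonneg (f x)) hf.norm hfp
  simp only [average_eq, smul_eq_mul] at jensen
  rw [Real.mul_rpow (by positivity) (by positivity), Real.inv_rpow hm.le,
    inv_mul_le_iff₀ (by positivity)] at jensen
  rwa [Real.rpow_sub_one hm.ne', div_eq_mul_inv, mul_assoc]

lemma integral_norm_le_measureReal_add [IsFiniteMeasure μ] {F : Type*} [NormedAddCommGroup F]
    (hp : 1 ≤ p) {f : α → F} (hf : Integrable f μ) (hfp : Integrable (fun x => ‖f x‖ ^ p) μ) :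
    ∫ x, ‖f x‖ ∂μ ≤ μ.real Set.univ + ∫ x, ‖f x‖ ^ p ∂μ := by
  have pointwise (x : α) : ‖f x‖ ≤ 1 + ‖f x‖ ^ p := by
    obtain h | h := le_total ‖f x‖ 1
    · exact h.trans (le_add_of_nonneg_right (by positivity))
    · exact (Real.self_le_rpow_of_one_le h hp).trans (le_add_of_nonneg_left zero_le_one)
  calc ∫ x, ‖f x‖ ∂μ ≤ ∫ x, (1 + ‖f x‖ ^ p) ∂μ :=
        integral_mono hf.norm ((integrable_const 1).add hfp) pointwise
    _ = _ := by rw [integral_add (integrable_const 1) hfp, integral_const, smul_eq_mul, mul_one]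

lemma tendsto_integral_norm_of_rpow {ι : Type*} {l : Filter ι} [IsFiniteMeasure μ] {F : Type*}
    [NormedAddCommGroup F] (hp : 1 ≤ p) {f : ι → α → F} (hf : ∀ k, Integrable (f k) μ)
    (hfp : ∀ k, Integrable (fun x => ‖f k x‖ ^ p) μ)
    (hlim : Tendsto (fun k => ∫ x, ‖f k x‖ ^ p ∂μ) l (𝓝 0)) :
    Tendsto (fun k => ∫ x, ‖f k x‖ ∂μ) l (𝓝 0) := by
  have hp₀ : 0 < p := zero_lt_one.trans_le hp
  have bound (k : ι) : ∫ x, ‖f k x‖ ∂μ ≤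
      (μ.real Set.univ ^ (p - 1) * ∫ x, ‖f k x‖ ^ p ∂μ) ^ p⁻¹ := by
    rw [Real.le_rpow_inv_iff_of_pos (by positivity) (by positivity) hp₀]
    exact rpow_integral_norm_le hp (hf k) (hfp k)
  have lim := (hlim.const_mul (μ.real Set.univ ^ (p - 1))).rpow_const (p := p⁻¹)
    (Or.inr (by positivity))
  rw [mul_zero, Real.zero_rpow (inv_ne_zero hp₀.ne')] at lim
  exact squeeze_zero (fun k => by positivity) bound lim

lemma tendsto_integral_mul_norm_rpow {ι : Type*} {l : Filter ι} {F : Type*}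
    [NormedAddCommGroup F] [NormedSpace ℝ F] [ProperSpace F] (hp : 0 < p) {V : α → ℝ} {M : ℝ}
    (hV : ∀ᵐ x ∂μ, |V x| ≤ M) {g : α → F} {f : ι → α → F}
    (hg : Integrable (fun x => ‖g x‖ ^ p) μ) (hVg : Integrable (fun x => V x * ‖g x‖ ^ p) μ)
    (hVf : ∀ k, Integrable (fun x => V x * ‖f k x‖ ^ p) μ)
    (hfg : ∀ k, Integrable (fun x => ‖f k x - g x‖ ^ p) μ)
    (hlim : Tendsto (fun k => ∫ x, ‖f k x - g x‖ ^ p ∂μ) l (𝓝 0)) :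
    Tendsto (fun k => ∫ x, V x * ‖f k x‖ ^ p ∂μ) l (𝓝 (∫ x, V x * ‖g x‖ ^ p ∂μ)) := by
  rw [tendsto_iff_norm_sub_tendsto_zero, tendsto_order]
  refine ⟨fun _ h => Eventually.of_forall fun _ => h.trans_le (norm_nonneg _), fun ε hε => ?_⟩
  set I := ∫ x, ‖g x‖ ^ p ∂μ
  set δ := ε / (2 * (|M| + 1) * (I + 1))
  have hI : 0 ≤ I := by positivity
  obtain ⟨C, _, pointwise⟩ := exists_abs_norm_rpow_sub_norm_rpow_le (X := F) hp
    (show 0 < δ by positivity)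
  have bound (k : ι) : ‖∫ x, V x * ‖f k x‖ ^ p ∂μ - ∫ x, V x * ‖g x‖ ^ p ∂μ‖ ≤
      |M| * (δ * I + C * ∫ x, ‖f k x - g x‖ ^ p ∂μ) := by
    rw [← integral_sub (hVf k) hVg, ← integral_const_mul, ← integral_const_mul,
      ← integral_add (hg.const_mul δ) ((hfg k).const_mul C), ← integral_const_mul]
    refine norm_integral_le_of_norm_le
      (((hg.const_mul δ).add ((hfg k).const_mul C)).const_mul |M|) ?_
    filter_upwards [hV] with x hx
    rw [← mul_sub, norm_mul]
    exact mul_le_mul (hx.trans (le_abs_self M)) (pointwise _ _) (norm_nonneg _) (abs_nonneg M)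
  have small : |M| * (δ * I) < ε := by
    have : (|M| + 1) * (δ * (I + 1)) = ε / 2 := by simp only [δ]; field_simp
    have : |M| * (δ * I) ≤ (|M| + 1) * (δ * (I + 1)) := by gcongr <;> linarith
    linarith
  have lim := ((hlim.const_mul C).const_add (δ * I)).const_mul |M|
  rw [mul_zero, add_zero] at lim
  filter_upwards [lim.eventually (gt_mem_nhds small)] with k hk
  exact (bound k).trans_lt hk

lemma tendsto_integral_norm_rpow_of_le {ι : Type*} {l : Filter ι} {F G : Type*}
    [NormedAddCommGroup F] [NormedAddCommGroup G] (hp : 0 ≤ p) {f : ι → α → F} {g : ι → α → G}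
    {c : ℝ} (hc : 0 ≤ c) (hg : ∀ k, Integrable (fun x => ‖g k x‖ ^ p) μ)
    (hfg : ∀ k, ∀ᵐ x ∂μ, ‖f k x‖ ≤ c * ‖g k x‖)
    (hlim : Tendsto (fun k => ∫ x, ‖g k x‖ ^ p ∂μ) l (𝓝 0)) :
    Tendsto (fun k => ∫ x, ‖f k x‖ ^ p ∂μ) l (𝓝 0) := by
  have lim := hlim.const_mul (c ^ p)
  rw [mul_zero] at lim
  refine squeeze_zero (fun k => by positivity) (fun k => ?_) lim
  rw [← integral_const_mul]
  refine integral_mono_of_nonneg (Eventually.of_forall fun x => by positivity)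
    ((hg k).const_mul _) ?_
  filter_upwards [hfg k] with x hx
  rw [← Real.mul_rpow hc (norm_nonneg _)]
  gcongr

lemma hasDerivAt_integral_mul_norm_add_smul_rpow [IsFiniteMeasure μ] {F : Type*}
    [NormedAddCommGroup F] [InnerProductSpace ℝ F] (hp : 1 < p) {V : α → ℝ} {a b : α → F}
    {M A B : ℝ} (hVm : AEStronglyMeasurable V μ) (ham : AEStronglyMeasurable a μ)
    (hbm : AEStronglyMeasurable b μ) (hV : ∀ᵐ x ∂μ, |V x| ≤ M) (ha : ∀ᵐ x ∂μ, ‖a x‖ ≤ A)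
    (hb : ∀ᵐ x ∂μ, ‖b x‖ ≤ B) :
    HasDerivAt (fun t : ℝ => ∫ x, V x * ‖a x + t • b x‖ ^ p ∂μ)
      (∫ x, V x * (p * ⟪pFlux p (a x), b x⟫) ∂μ) 0 := by
  have hp₀ : 0 < p := zero_lt_one.trans hp
  have meas (t : ℝ) : AEStronglyMeasurable (fun x => V x * ‖a x + t • b x‖ ^ p) μ :=
    hVm.mul ((Real.continuous_rpow_const hp₀.le).comp_aestronglyMeasurable
      (ham.add (hbm.const_smul t)).norm)
  have meas' : AEStronglyMeasurable (fun x => V x * (p * ⟪pFlux p (a x), b x⟫)) μ :=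
    hVm.mul ((((continuous_pFlux hp).comp_aestronglyMeasurable ham).inner hbm).const_mul p)
  have int : Integrable (fun x => V x * ‖a x + (0 : ℝ) • b x‖ ^ p) μ := by
    refine Integrable.of_bound (meas 0) (M * A ^ p) ?_
    filter_upwards [hV, ha] with x hVx hax
    rw [zero_smul, add_zero, norm_mul, Real.norm_of_nonneg (by positivity : 0 ≤ ‖a x‖ ^ p)]
    exact mul_le_mul hVx (by gcongr) (by positivity) ((abs_nonneg _).trans hVx)
  have bound : ∀ᵐ x ∂μ, ∀ t ∈ Metric.ball (0 : ℝ) 1,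
      ‖V x * (p * ⟪pFlux p (a x + t • b x), b x⟫)‖ ≤ M * (p * ((A + B) ^ (p - 1) * B)) := by
    filter_upwards [hV, ha, hb] with x hVx hax hbx t ht
    have ht' : ‖t‖ ≤ 1 := by simpa using (Metric.mem_ball.1 ht).le
    have size : ‖a x + t • b x‖ ≤ A + B := by
      refine (norm_add_le _ _).trans (add_le_add hax ?_)
      rw [norm_smul]
      exact (mul_le_of_le_one_left (norm_nonneg _) ht').trans hbx
    have flux : ‖⟪pFlux p (a x + t • b x), b x⟫‖ ≤ (A + B) ^ (p - 1) * B := by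
      refine (norm_inner_le_norm _ _).trans ?_
      rw [norm_pFlux hp.ne']
      exact mul_le_mul (Real.rpow_le_rpow (norm_nonneg _) size (sub_pos.2 hp).le) hbx
        (norm_nonneg _) (Real.rpow_nonneg ((norm_nonneg _).trans size) _)
    rw [norm_mul, norm_mul, Real.norm_of_nonneg hp₀.le]
    exact mul_le_mul hVx (by gcongr) (by positivity) ((abs_nonneg _).trans hVx)
  simpa using (hasDerivAt_integral_of_dominated_loc_of_deriv_le (Metric.ball_mem_nhds 0 one_pos)
    (Eventually.of_forall meas) int (by simpa using meas') bound (integrable_const _)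
    (Eventually.of_forall fun x t _ =>
      (hasDerivAt_norm_add_smul_rpow hp (a x) (b x) t).const_mul (V x))).2

end IntegralRpow

/-! ### Gradients and test functions -/

section Gradient

variable {E : Type*} [NormedAddCommGroup E] [InnerProductSpace ℝ E] [CompleteSpace E]
  {f g : E → ℝ} {f' g' x : E}

lemma hasGradientAt_add (hf : HasGradientAt f f' x) (hg : HasGradientAt g g' x) :
    HasGradientAt (fun y => f y + g y) (f' + g') x := by
  rw [hasGradientAt_iff_hasFDerivAt, map_add]
  exact hf.hasFDerivAt.fun_add hg.hasFDerivAt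

lemma hasGradientAt_sub (hf : HasGradientAt f f' x) (hg : HasGradientAt g g' x) :
    HasGradientAt (fun y => f y - g y) (f' - g') x := by
  rw [hasGradientAt_iff_hasFDerivAt, map_sub]
  exact hf.hasFDerivAt.fun_sub hg.hasFDerivAt

lemma hasGradientAt_mul (hf : HasGradientAt f f' x) (hg : HasGradientAt g g' x) :
    HasGradientAt (fun y => f y * g y) (f x • g' + g x • f') x := by
  rw [hasGradientAt_iff_hasFDerivAt, map_add, map_smul, map_smul]
  exact hf.hasFDerivAt.mul hg.hasFDerivAt

lemma hasGradientAt_abs_rpow {p : ℝ} (hp : 1 < p) (hf : HasGradientAt f f' x) :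
    HasGradientAt (fun y => |f y| ^ p) ((p * pFlux p (f x)) • f') x := by
  rw [hasGradientAt_iff_hasFDerivAt, map_smul]
  exact (hasDerivAt_abs_rpow_pFlux hp (f x)).comp_hasFDerivAt x hf.hasFDerivAt

lemma continuousOn_gradient {s : Set E} (hs : IsOpen s) (hf : ContDiffOn ℝ 1 f s) :
    ContinuousOn (gradient f) s :=
  (InnerProductSpace.toDual ℝ E).symm.continuous.comp_continuousOn
    (hf.continuousOn_fderiv_of_isOpen hs le_rfl)

lemma continuous_gradient (hf : ContDiff ℝ 1 f) : Continuous (gradient f) :=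
  continuousOn_univ.1 (continuousOn_gradient isOpen_univ hf.contDiffOn)

lemma hasGradientAt_of_contDiff (hf : ContDiff ℝ 1 f) (x : E) :
    HasGradientAt f (gradient f x) x :=
  (hf.differentiable one_ne_zero x).hasGradientAt

lemma gradient_add_smul {f g : E → ℝ} (hf : ContDiff ℝ 1 f) (hg : ContDiff ℝ 1 g) (t : ℝ) (x : E) :
    gradient (f + t • g) x = gradient f x + t • gradient g x := by
  simp [gradient, fderiv_add (hf.differentiable one_ne_zero x)
    ((hg.differentiable one_ne_zero x).const_smul t), fderiv_const_smul
    (hg.differentiable one_ne_zero x)]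

lemma gradient_eq_zero_of_notMem_tsupport (hx : x ∉ tsupport f) : gradient f x = 0 := by
  rw [(notMem_tsupport_iff_eventuallyEq.1 hx).gradient_eq]
  exact gradient_const x 0

end Gradient

/-- `C¹` functions with compact support in `Ω`: the larger class of test functions, closed under
the nonlinear operations used below, to which the hypotheses on smooth ones extend by density. -/
def IsC1TestFun {E : Type*} [NormedAddCommGroup E] [NormedSpace ℝ E] (Ω : Set E) (u : E → ℝ) :
    Prop :=
  ContDiff ℝ 1 u ∧ HasCompactSupport u ∧ tsupport u ⊆ Ω

lemma IsTestFun.isC1TestFun {d : ℕ} {Ω : Set (Euc d)} {u : Euc d → ℝ} (hu : IsTestFun Ω u) :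
    IsC1TestFun Ω u :=
  ⟨hu.1.of_le (by exact_mod_cast le_top), hu.2⟩

section C1TestFun

variable {E : Type*} [NormedAddCommGroup E] [NormedSpace ℝ E] {Ω K : Set E}

lemma isC1TestFun_of_eq_zero {f : E → ℝ} (hK : IsCompact K) (hKΩ : K ⊆ Ω)
    (hf : ∀ x ∈ Ω, ContDiffAt ℝ 1 f x) (hf₀ : ∀ x ∉ K, f x = 0) : IsC1TestFun Ω f := by
  have supp : tsupport f ⊆ K :=
    closure_minimal (Function.support_subset_iff'.2 hf₀) hK.isClosed
  refine ⟨contDiff_iff_contDiffAt.2 fun x => ?_,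
    hK.of_isClosed_subset (isClosed_tsupport f) supp, supp.trans hKΩ⟩
  by_cases hx : x ∈ tsupport f
  · exact hf x (hKΩ (supp hx))
  · exact contDiffAt_const.congr_of_eventuallyEq (notMem_tsupport_iff_eventuallyEq.1 hx)

lemma IsC1TestFun.mul_contDiffOn {χ f : E → ℝ} (hχ : IsC1TestFun Ω χ) (hΩ : IsOpen Ω)
    (hf : ContDiffOn ℝ 1 f Ω) : IsC1TestFun Ω fun x => χ x * f x :=
  isC1TestFun_of_eq_zero hχ.2.1 hχ.2.2
    (fun _ hx => hχ.1.contDiffAt.mul (hf.contDiffAt (hΩ.mem_nhds hx)))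
    fun x hx => by simp [image_eq_zero_of_notMem_tsupport hx]

end C1TestFun

section SmoothApprox

variable {d : ℕ} {Ω K : Set (Euc d)}

lemma exists_isTestFun_eventually_eq_one (hΩ : IsOpen Ω) (hK : IsCompact K) (hKΩ : K ⊆ Ω) :
    ∃ χ : Euc d → ℝ, IsTestFun Ω χ ∧ (∀ x, χ x ∈ Set.Icc 0 1) ∧ ∀ᶠ x in 𝓝ˢ K, χ x = 1 := by
  obtain ⟨L, hL, hKL, hLΩ⟩ := exists_compact_between hK hΩ hKΩ
  obtain ⟨χ, hχ_one, hχ_zero, hχ⟩ := exists_contMDiffMap_one_nhds_of_subset_interior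
    (modelWithCornersSelf ℝ (Euc d)) (n := (⊤ : ℕ∞)) hK.isClosed hKL
  have supp : tsupport χ ⊆ L :=
    closure_minimal (Function.support_subset_iff'.2 hχ_zero) hL.isClosed
  exact ⟨χ, ⟨χ.contMDiff.contDiff, hL.of_isClosed_subset (isClosed_tsupport _) supp,
    supp.trans hLΩ⟩, hχ, hχ_one⟩

lemma exists_isC1TestFun_eventuallyEq (hΩ : IsOpen Ω) (hK : IsCompact K) (hKΩ : K ⊆ Ω)
    {v : Euc d → ℝ} (hv : ContDiffOn ℝ 1 v Ω) :
    ∃ w : Euc d → ℝ, IsC1TestFun Ω w ∧ w =ᶠ[𝓝ˢ K] v := by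
  obtain ⟨χ, hχ, -, hχ_one⟩ := exists_isTestFun_eventually_eq_one hΩ hK hKΩ
  refine ⟨_, hχ.isC1TestFun.mul_contDiffOn hΩ hv, ?_⟩
  filter_upwards [hχ_one] with x hx
  rw [hx, one_mul]

end SmoothApprox

section Convolution

open scoped Convolution

variable {E : Type*} [NormedAddCommGroup E] [InnerProductSpace ℝ E] [FiniteDimensional ℝ E]
  [MeasurableSpace E] [BorelSpace E] (ρ : ContDiffBump (0 : E)) {z : E → ℝ}

lemma tsupport_normed_convolution_subset (z : E → ℝ) :
    tsupport (ρ.normed volume ⋆ z) ⊆ Metric.cthickening ρ.rOut (tsupport z) := by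
  refine closure_minimal ((support_convolution_subset (ContinuousLinearMap.lsmul ℝ ℝ)).trans ?_)
    Metric.isClosed_cthickening
  rintro _ ⟨a, ha, b, hb, rfl⟩
  rw [ρ.support_normed_eq, mem_ball_zero_iff] at ha
  refine Metric.mem_cthickening_of_dist_le _ b _ _ (subset_tsupport z hb) ?_
  simpa [dist_eq_norm] using ha.le

lemma fderiv_normed_convolution (hz : ContDiff ℝ 1 z) (hz_supp : HasCompactSupport z)
    (x : E) :
    fderiv ℝ (ρ.normed volume ⋆ z) x = (ρ.normed volume ⋆ fderiv ℝ z) x := by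
  have hρ : LocallyIntegrable (ρ.normed volume) volume := ρ.continuous_normed.locallyIntegrable
  rw [(hz_supp.hasFDerivAt_convolution_right (ContinuousLinearMap.lsmul ℝ ℝ) hρ hz x).fderiv]
  congr 1

lemma dist_normed_convolution_le_of_dist_le {F : Type*} [NormedAddCommGroup F] [NormedSpace ℝ F]
    [CompleteSpace F] {h : E → F} (hh : Continuous h) {ε δ : ℝ} (hρ : ρ.rOut ≤ δ)
    (hε : ∀ ⦃x y⦄, dist x y < δ → dist (h x) (h y) < ε) (x : E) :
    dist ((ρ.normed volume ⋆ h) x) (h x) ≤ ε :=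
  ρ.dist_normed_convolution_le hh.aestronglyMeasurable
    fun _ hy => (hε ((Metric.mem_ball.1 hy).trans_le hρ)).le

lemma exists_contDiff_gradient_dist_le (hz : ContDiff ℝ 1 z)
    (hz_supp : HasCompactSupport z) {δ ε : ℝ} (hδ : 0 < δ) (hε : 0 < ε) :
    ∃ g : E → ℝ, ContDiff ℝ (⊤ : ℕ∞) g ∧ tsupport g ⊆ Metric.cthickening δ (tsupport z) ∧
      (∀ x, dist (g x) (z x) ≤ ε) ∧ (∀ x, dist (gradient g x) (gradient z x) ≤ ε) ∧
      ((∀ x, 0 ≤ z x) → ∀ x, 0 ≤ g x) := by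
  have hdz := hz.continuous_fderiv one_ne_zero
  obtain ⟨δ₁, hδ₁, h₁⟩ := Metric.uniformContinuous_iff.1
    (hz_supp.uniformContinuous_of_continuous hz.continuous) ε hε
  obtain ⟨δ₂, hδ₂, h₂⟩ := Metric.uniformContinuous_iff.1
    ((hz_supp.fderiv ℝ).uniformContinuous_of_continuous hdz) ε hε
  set r := min δ (min δ₁ δ₂)
  have hr : 0 < r := by positivity
  let ρ : ContDiffBump (0 : E) := ⟨r / 2, r, half_pos hr, half_lt_self hr⟩
  refine ⟨_, (ρ.hasCompactSupport_normed (μ := volume)).contDiff_convolution_left _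
      ρ.contDiff_normed hz.continuous.locallyIntegrable,
    (tsupport_normed_convolution_subset ρ z).trans (Metric.cthickening_mono (min_le_left _ _) _),
    dist_normed_convolution_le_of_dist_le ρ hz.continuous
      ((min_le_right _ _).trans (min_le_left _ _)) h₁, fun x => ?_, fun hz₀ x => ?_⟩
  · rw [gradient, gradient, LinearIsometryEquiv.dist_map, fderiv_normed_convolution ρ hz hz_supp]
    exact dist_normed_convolution_le_of_dist_le ρ hdz
      ((min_le_right _ _).trans (min_le_right _ _)) h₂ x
  · exact integral_nonneg fun y => mul_nonneg (ρ.nonneg_normed y) (hz₀ _)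

end Convolution

/-! ### Density of smooth test functions -/

section Density

variable {d : ℕ} {Ω K : Set (Euc d)} {p : ℝ} {V : Euc d → ℝ}

lemma LocBddPotential.integrableOn_mul (hV : LocBddPotential Ω V) (hK : IsCompact K)
    (hKΩ : K ⊆ Ω) {f : Euc d → ℝ} (hf : ContinuousOn f K) :
    IntegrableOn (fun x => V x * f x) K := by
  obtain ⟨M, hM⟩ := hV.2 K hKΩ hK
  exact (hf.integrableOn_compact hK).bdd_mul hV.1.aestronglyMeasurable
    (ae_restrict_of_forall_mem hK.measurableSet hM)

lemma LocBddPotential.integrableOn_norm_rpow_add (hV : LocBddPotential Ω V) (hK : IsCompact K)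
    (hKΩ : K ⊆ Ω) (hp : 0 ≤ p) {F : Type*} [NormedAddCommGroup F] {f : Euc d → F}
    {g : Euc d → ℝ} (hf : ContinuousOn f K) (hg : ContinuousOn g K) :
    IntegrableOn (fun x => ‖f x‖ ^ p + V x * g x) K :=
  ((hf.norm.rpow_const fun _ _ => Or.inr hp).integrableOn_compact hK).add
    (hV.integrableOn_mul hK hKΩ hg)

lemma energyQ_eq_add (hV : LocBddPotential Ω V) (hK : IsCompact K) (hKΩ : K ⊆ Ω) (hp : 0 ≤ p)
    {u : Euc d → ℝ} (hu : ContDiff ℝ 1 u) :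
    energyQ K V p u = (∫ x in K, ‖gradient u x‖ ^ p) + ∫ x in K, V x * |u x| ^ p :=
  integral_add (((continuous_gradient hu).norm.rpow_const
    fun _ => Or.inr hp).continuousOn.integrableOn_compact hK) (hV.integrableOn_mul hK hKΩ
      (hu.continuous.abs.rpow_const fun _ => Or.inr hp).continuousOn)

lemma IsC1TestFun.integrableOn_energyQ (hΩ : IsOpen Ω) (hV : LocBddPotential Ω V) (hp : 0 < p)
    {u : Euc d → ℝ} (hu : IsC1TestFun Ω u) :
    IntegrableOn (fun x => ‖gradient u x‖ ^ p + V x * |u x| ^ p) Ω := by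
  refine IntegrableOn.of_forall_sdiff_eq_zero (s := tsupport u) ?_ hΩ.measurableSet fun x hx => ?_
  · exact hV.integrableOn_norm_rpow_add hu.2.1 hu.2.2 hp.le (continuous_gradient hu.1).continuousOn
      (hu.1.continuous.abs.rpow_const fun _ => Or.inr hp.le).continuousOn
  · simp [gradient_eq_zero_of_notMem_tsupport hx.2, image_eq_zero_of_notMem_tsupport hx.2,
      Real.zero_rpow hp.ne']

lemma IsC1TestFun.exists_isTestFun_jet_dist_le (hΩ : IsOpen Ω) {z : Euc d → ℝ}
    (hz : IsC1TestFun Ω z) :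
    ∃ K ⊆ Ω, IsCompact K ∧ ∃ g : ℕ → Euc d → ℝ, (∀ n, IsTestFun Ω (g n)) ∧
      (∀ n, tsupport (g n) ⊆ K) ∧ ((∀ x, 0 ≤ z x) → ∀ n x, 0 ≤ g n x) ∧
      ∀ n x, dist (g n x, gradient (g n) x) (z x, gradient z x) ≤ 1 / ((n : ℝ) + 1) := by
  obtain ⟨δ, hδ, hδΩ⟩ := hz.2.1.isCompact.exists_cthickening_subset_open hΩ hz.2.2
  have hK : IsCompact (Metric.cthickening δ (tsupport z)) := hz.2.1.isCompact.cthickening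
  choose g hg hgK hg_dist hg_grad hg_nonneg using fun n : ℕ =>
    exists_contDiff_gradient_dist_le hz.1 hz.2.1 hδ (Nat.one_div_pos_of_nat (α := ℝ) (n := n))
  exact ⟨_, hδΩ, hK, g, fun n => ⟨hg n, hK.of_isClosed_subset (isClosed_tsupport _) (hgK n),
    (hgK n).trans hδΩ⟩, hgK, fun h n => hg_nonneg n h,
    fun n x => max_le (hg_dist n x) (hg_grad n x)⟩

lemma exists_isTestFun_tendsto_setIntegral (hΩ : IsOpen Ω) {z : Euc d → ℝ}
    (hz : IsC1TestFun Ω z) :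
    ∃ g : ℕ → Euc d → ℝ, (∀ n, IsTestFun Ω (g n)) ∧ ((∀ x, 0 ≤ z x) → ∀ n x, 0 ≤ g n x) ∧
      ∀ F : Euc d → ℝ × Euc d → ℝ, (∀ x, Continuous (F x)) → (∀ x, F x 0 = 0) →
        (∀ w, IsTestFun Ω w →
          AEStronglyMeasurable (fun x => F x (w x, gradient w x)) (volume.restrict Ω)) →
        (∀ K ⊆ Ω, IsCompact K → ∀ R, ∃ M, ∀ x ∈ K, ∀ ξ, ‖ξ‖ ≤ R → ‖F x ξ‖ ≤ M) →
        Tendsto (fun n => ∫ x in Ω, F x (g n x, gradient (g n) x)) atTop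
          (𝓝 (∫ x in Ω, F x (z x, gradient z x))) := by
  obtain ⟨K, hKΩ, hK, g, hg, hgK, hg_nonneg, jet_dist⟩ := hz.exists_isTestFun_jet_dist_le hΩ
  refine ⟨g, hg, hg_nonneg, fun F hF hF₀ hF_meas hF_bound => ?_⟩
  obtain ⟨R, hR⟩ := hK.exists_bound_of_continuousOn
    (hz.1.continuous.prodMk (continuous_gradient hz.1)).continuousOn
  obtain ⟨M, hM⟩ := hF_bound K hKΩ hK (R + 1)
  refine tendsto_integral_of_dominated_convergence (K.indicator fun _ => M)
    (fun n => hF_meas _ (hg n))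
    ((integrable_indicator_iff hK.measurableSet).2
      (integrableOn_const hK.measure_lt_top.ne)).integrableOn
    (fun n => Eventually.of_forall fun x => ?_) (Eventually.of_forall fun x => ?_)
  · by_cases hx : x ∈ K
    · rw [Set.indicator_of_mem hx]
      refine hM x hx _ ((norm_le_norm_add_norm_sub' _ (z x, gradient z x)).trans
        (add_le_add (hR x hx) ?_))
      rw [← dist_eq_norm]
      exact (jet_dist n x).trans (div_le_one_of_le₀ (by simp) (by positivity))
    · have hx' : x ∉ tsupport (g n) := fun h => hx (hgK n h)
      rw [Set.indicator_of_notMem hx, image_eq_zero_of_notMem_tsupport hx',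
        gradient_eq_zero_of_notMem_tsupport hx', ← Prod.zero_eq_mk, hF₀, norm_zero]
  · exact ((hF x).tendsto _).comp (tendsto_iff_dist_tendsto_zero.2 (squeeze_zero
      (fun _ => dist_nonneg) (jet_dist · x) tendsto_one_div_add_atTop_nhds_zero_nat))

lemma energyQ_nonneg_of_isC1TestFun (hΩ : IsOpen Ω) (hV : LocBddPotential Ω V) (hp : 1 < p)
    (hQ : ∀ u, IsTestFun Ω u → 0 ≤ energyQ Ω V p u) {z : Euc d → ℝ} (hz : IsC1TestFun Ω z) :
    0 ≤ energyQ Ω V p z := by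
  have hp₀ : 0 < p := zero_lt_one.trans hp
  obtain ⟨g, hg, -, hlim⟩ := exists_isTestFun_tendsto_setIntegral hΩ hz
  refine ge_of_tendsto' (hlim (fun x ξ => ‖ξ.2‖ ^ p + V x * |ξ.1| ^ p) (fun x => ?_) (fun x => ?_)
    (fun w hw => ?_) fun K hKΩ hK R => ?_) fun n => hQ (g n) (hg n)
  · exact (continuous_snd.norm.rpow_const fun _ => Or.inr hp₀.le).add
      ((continuous_fst.abs.rpow_const fun _ => Or.inr hp₀.le).const_mul _)
  · simp [Real.zero_rpow hp₀.ne']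
  · exact (((continuous_gradient hw.isC1TestFun.1).norm.rpow_const
      fun _ => Or.inr hp₀.le).aestronglyMeasurable).add (hV.1.aestronglyMeasurable.mul
        (hw.1.continuous.abs.rpow_const fun _ => Or.inr hp₀.le).aestronglyMeasurable)
  · obtain ⟨M, hM⟩ := hV.2 K hKΩ hK
    refine ⟨R ^ p + M * R ^ p, fun x hx ξ hξ => (norm_add_le _ _).trans (add_le_add ?_ ?_)⟩
    · rw [Real.norm_of_nonneg (by positivity)]
      exact Real.rpow_le_rpow (norm_nonneg _) ((norm_snd_le ξ).trans hξ) hp₀.le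
    · rw [norm_mul, Real.norm_of_nonneg (by positivity : 0 ≤ |ξ.1| ^ p)]
      exact mul_le_mul (hM x hx)
        (Real.rpow_le_rpow (abs_nonneg _) ((norm_fst_le ξ).trans hξ) hp₀.le) (by positivity)
        ((abs_nonneg _).trans (hM x hx))

lemma IsPositiveSupersolution.integral_nonneg (hΩ : IsOpen Ω) (hV : LocBddPotential Ω V)
    (hp : 1 < p) {v : Euc d → ℝ} (hv : IsPositiveSupersolution Ω V p v) {φ : Euc d → ℝ}
    (hφ : IsC1TestFun Ω φ) (hφ₀ : ∀ x, 0 ≤ φ x) :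
    0 ≤ ∫ x in Ω, (⟪pFlux p (gradient v x), gradient φ x⟫ + V x * v x ^ (p - 1) * φ x) := by
  obtain ⟨g, hg, hg₀, hlim⟩ := exists_isTestFun_tendsto_setIntegral hΩ hφ
  have flux_cont : ContinuousOn (fun x => pFlux p (gradient v x)) Ω :=
    (continuous_pFlux hp).comp_continuousOn (continuousOn_gradient hΩ hv.1)
  have pow_cont : ContinuousOn (fun x => v x ^ (p - 1)) Ω :=
    hv.1.continuousOn.rpow_const fun x hx => Or.inl (hv.2.1 x hx).ne'
  refine ge_of_tendsto' (hlim
    (fun x ξ => ⟪pFlux p (gradient v x), ξ.2⟫ + V x * v x ^ (p - 1) * ξ.1)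
    (fun x => by fun_prop) (fun x => by simp) (fun w hw => ?_) fun K hKΩ hK R => ?_) fun n => ?_
  · exact ((flux_cont.aestronglyMeasurable hΩ.measurableSet).inner
      (continuous_gradient hw.isC1TestFun.1).aestronglyMeasurable).add
        ((hV.1.aestronglyMeasurable.mul (pow_cont.aestronglyMeasurable hΩ.measurableSet)).mul
          hw.1.continuous.aestronglyMeasurable)
  · obtain ⟨M, hM⟩ := hV.2 K hKΩ hK
    obtain ⟨A, hA⟩ := hK.exists_bound_of_continuousOn (flux_cont.mono hKΩ)
    obtain ⟨B, hB⟩ := hK.exists_bound_of_continuousOn (pow_cont.mono hKΩ)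
    refine ⟨A * R + M * B * R, fun x hx ξ hξ => (norm_add_le _ _).trans (add_le_add ?_ ?_)⟩
    · exact (norm_inner_le_norm _ _).trans (mul_le_mul (hA x hx) ((norm_snd_le ξ).trans hξ)
        (norm_nonneg _) ((norm_nonneg _).trans (hA x hx)))
    · have hMx := hM x hx
      have hM₀ := (abs_nonneg _).trans hMx
      have hB₀ := (norm_nonneg _).trans (hB x hx)
      rw [norm_mul, norm_mul]
      exact mul_le_mul (mul_le_mul hMx (hB x hx) (norm_nonneg _) hM₀)
        ((norm_fst_le ξ).trans hξ) (norm_nonneg _) (mul_nonneg hM₀ hB₀)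
  · simpa only [inner_pFlux_left] using hv.2.2 (g n) (hg n) (hg₀ hφ₀ n)

end Density

/-! ### Patching a competitor into a function -/

section Patch

/-- The function `u` with the competitor `f` patched in with weight `|η| ^ p`: equal to `u` where
`η = 0` and to `f` where `η = 1`. -/
def patch {X : Type*} (p : ℝ) (η u f : X → ℝ) (x : X) : ℝ :=
  u x + |η x| ^ p * (f x - u x)

lemma patch_of_notMem_tsupport {X : Type*} [TopologicalSpace X] {p : ℝ} (hp : p ≠ 0)
    {η u f : X → ℝ} {x : X} (hx : x ∉ tsupport η) : patch p η u f x = u x := by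
  simp [patch, image_eq_zero_of_notMem_tsupport hx, Real.zero_rpow hp]

lemma continuous_patch {X : Type*} [TopologicalSpace X] {p : ℝ} (hp : 0 ≤ p) {η u f : X → ℝ}
    (hη : Continuous η) (hu : Continuous u) (hf : Continuous f) : Continuous (patch p η u f) :=
  hu.add ((hη.abs.rpow_const fun _ => Or.inr hp).mul (hf.sub hu))

variable {E : Type*} [NormedAddCommGroup E] [InnerProductSpace ℝ E] {p : ℝ} {η u f : E → ℝ} {x : E}

lemma IsC1TestFun.patch {Ω : Set E} (hp : 1 < p) (hη : IsC1TestFun Ω η) (hu : IsC1TestFun Ω u)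
    (hf : ContDiff ℝ 1 f) : IsC1TestFun Ω (patch p η u f) := by
  refine isC1TestFun_of_eq_zero (hu.2.1.isCompact.union hη.2.1.isCompact)
    (Set.union_subset hu.2.2 hη.2.2) (fun x _ => ?_) fun x hx => ?_
  · exact (hu.1.add ((hη.1.norm_rpow hp).mul (hf.sub hu.1))).contDiffAt
  · rw [Set.mem_union, not_or] at hx
    rw [patch_of_notMem_tsupport (zero_lt_one.trans hp).ne' hx.2,
      image_eq_zero_of_notMem_tsupport hx.1]

variable [CompleteSpace E]

/-- The vector field `η∇f + p(f - u)∇η`, whose `p`-th power is the gradient energy added by the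
patching (see `norm_gradient_patch_rpow_le`). -/
def patchGradient (p : ℝ) (η u f : E → ℝ) (x : E) : E :=
  η x • gradient f x + (p * (f x - u x)) • gradient η x

lemma patchGradient_of_notMem_tsupport (hx : x ∉ tsupport η) : patchGradient p η u f x = 0 := by
  simp [patchGradient, image_eq_zero_of_notMem_tsupport hx, gradient_eq_zero_of_notMem_tsupport hx]

lemma continuous_patchGradient (hη : ContDiff ℝ 1 η) (hu : Continuous u) (hf : ContDiff ℝ 1 f) :
    Continuous (patchGradient p η u f) :=
  (hη.continuous.smul (continuous_gradient hf)).add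
    ((continuous_const.mul (hf.continuous.sub hu)).smul (continuous_gradient hη))

lemma hasGradientAt_patch (hp : 1 < p) (hη : ContDiff ℝ 1 η) (hu : ContDiff ℝ 1 u)
    (hf : ContDiff ℝ 1 f) (x : E) :
    HasGradientAt (patch p η u f)
      ((1 - |η x| ^ p) • gradient u x + pFlux p (η x) • patchGradient p η u f x) x := by
  change HasGradientAt (fun y => u y + |η y| ^ p * (f y - u y)) _ x
  convert hasGradientAt_add (hasGradientAt_of_contDiff hu x)
    (hasGradientAt_mul (hasGradientAt_abs_rpow hp (hasGradientAt_of_contDiff hη x))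
      (hasGradientAt_sub (hasGradientAt_of_contDiff hf x) (hasGradientAt_of_contDiff hu x))) using 1
  simp only [patchGradient, ← pFlux_mul_self (zero_lt_one.trans hp).ne']
  module

/-- Where `η ≠ 0`, the gradient of the patched function is the convex combination of `∇u` and
`η⁻¹ • patchGradient` with weights `1 - |η| ^ p` and `|η| ^ p`. -/
lemma norm_gradient_patch_rpow_le (hp : 1 < p) (hη : ContDiff ℝ 1 η) (hη₁ : |η x| ≤ 1)
    (hu : ContDiff ℝ 1 u) (hf : ContDiff ℝ 1 f) :
    ‖gradient (patch p η u f) x‖ ^ p ≤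
      (1 - |η x| ^ p) * ‖gradient u x‖ ^ p + ‖patchGradient p η u f x‖ ^ p := by
  have hp₀ : p ≠ 0 := (zero_lt_one.trans hp).ne'
  rw [(hasGradientAt_patch hp hη hu hf x).gradient]
  obtain hx | hx := eq_or_ne (η x) 0
  · simp only [hx, pFlux, norm_zero, abs_zero, Real.zero_rpow hp₀, smul_zero, zero_smul, sub_zero,
      one_smul, add_zero, one_mul]
    exact le_add_of_nonneg_right (by positivity)
  have flux : pFlux p (η x) = |η x| ^ p * (η x)⁻¹ := by
    rw [← pFlux_mul_self hp₀, mul_inv_cancel_right₀ hx]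
  have hη_pos : 0 < |η x| := abs_pos.2 hx
  have combo := (strictConvexOn_norm_rpow hp).convexOn.2 (Set.mem_univ (gradient u x))
    (Set.mem_univ ((η x)⁻¹ • patchGradient p η u f x))
    (sub_nonneg.2 (Real.rpow_le_one (abs_nonneg _) hη₁ (zero_lt_one.trans hp).le))
    (by positivity) (sub_add_cancel 1 (|η x| ^ p))
  rw [smul_smul, ← flux] at combo
  refine combo.trans_eq ?_
  simp only [norm_smul, norm_inv, Real.norm_eq_abs, smul_eq_mul]
  rw [Real.mul_rpow (by positivity) (norm_nonneg _), Real.inv_rpow hη_pos.le,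
    mul_inv_cancel_left₀ (by positivity)]

end Patch

section PatchCost

variable {d : ℕ} {Ω : Set (Euc d)} {p : ℝ} {V η u f : Euc d → ℝ}

/-- An upper bound for the change of the energy when the competitor `f` is patched into `u`, not
counting the gain `∫ |η| ^ p * ‖∇u‖ ^ p`. It does not involve `∇u`. -/
def patchCost (V : Euc d → ℝ) (p : ℝ) (η u f : Euc d → ℝ) : ℝ :=
  ∫ x in tsupport η,
    (‖patchGradient p η u f x‖ ^ p + V x * (|patch p η u f x| ^ p - |u x| ^ p))

lemma setIntegral_abs_rpow_mul_norm_gradient_rpow_le (hΩ : IsOpen Ω) (hp : 1 < p)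
    (hV : LocBddPotential Ω V) (hQ : ∀ u, IsTestFun Ω u → 0 ≤ energyQ Ω V p u)
    (hη : IsC1TestFun Ω η) (hη₁ : ∀ x, |η x| ≤ 1) (hu : IsC1TestFun Ω u) (hf : ContDiff ℝ 1 f) :
    ∫ x in tsupport η, |η x| ^ p * ‖gradient u x‖ ^ p ≤
      energyQ Ω V p u + patchCost V p η u f := by
  have hp₀ : 0 < p := zero_lt_one.trans hp
  have hT : IsCompact (tsupport η) := hη.2.1
  have hw : IsC1TestFun Ω (patch p η u f) := hη.patch hp hu hf
  have int_u := hu.integrableOn_energyQ hΩ hV hp₀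
  have int_w := hw.integrableOn_energyQ hΩ hV hp₀
  have int_gain : IntegrableOn (fun x => |η x| ^ p * ‖gradient u x‖ ^ p) (tsupport η) :=
    ((hη.1.continuous.abs.rpow_const fun _ => Or.inr hp₀.le).mul ((continuous_gradient
      hu.1).norm.rpow_const fun _ => Or.inr hp₀.le)).continuousOn.integrableOn_compact hT
  have int_cost : IntegrableOn (fun x => ‖patchGradient p η u f x‖ ^ p
      + V x * (|patch p η u f x| ^ p - |u x| ^ p)) (tsupport η) :=
    hV.integrableOn_norm_rpow_add hT hη.2.2 hp₀.le
      (continuous_patchGradient hη.1 hu.1.continuous hf).continuousOn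
      ((hw.1.continuous.abs.rpow_const fun _ => Or.inr hp₀.le).sub
        (hu.1.continuous.abs.rpow_const fun _ => Or.inr hp₀.le)).continuousOn
  have energy_diff : energyQ Ω V p u - energyQ Ω V p (patch p η u f) =
      ∫ x in tsupport η, ((‖gradient u x‖ ^ p + V x * |u x| ^ p)
        - (‖gradient (patch p η u f) x‖ ^ p + V x * |patch p η u f x| ^ p)) := by
    rw [energyQ, energyQ, ← integral_sub int_u int_w]
    refine setIntegral_eq_of_subset_of_forall_sdiff_eq_zero hΩ.measurableSet hη.2.2 fun x hx => ?_
    rw [(hasGradientAt_patch hp hη.1 hu.1 hf x).gradient, patchGradient_of_notMem_tsupport hx.2,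
      patch_of_notMem_tsupport hp₀.ne' hx.2, image_eq_zero_of_notMem_tsupport hx.2]
    simp [Real.zero_rpow hp₀.ne']
  have gain_le := integral_mono (int_gain.sub int_cost)
    ((int_u.mono_set hη.2.2).sub (int_w.mono_set hη.2.2)) fun x => by
      have := norm_gradient_patch_rpow_le hp hη.1 (hη₁ x) hu.1 hf
      simp only [Pi.sub_apply]
      linarith
  have hQw := energyQ_nonneg_of_isC1TestFun hΩ hV hp hQ hw
  simp only [Pi.sub_apply] at gain_le
  rw [← energy_diff, integral_sub int_gain int_cost] at gain_le
  rw [patchCost]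
  linarith

lemma patchCost_eq (hp : 0 < p) (hV : LocBddPotential Ω V) (hη : IsC1TestFun Ω η)
    (hu : Continuous u) (hf : ContDiff ℝ 1 f) :
    patchCost V p η u f = (∫ x in tsupport η, ‖patchGradient p η u f x‖ ^ p) +
      ((∫ x in tsupport η, V x * |patch p η u f x| ^ p) - ∫ x in tsupport η, V x * |u x| ^ p) := by
  have int_grad : IntegrableOn (fun x => ‖patchGradient p η u f x‖ ^ p) (tsupport η) :=
    ((continuous_patchGradient hη.1 hu hf).norm.rpow_const
      fun _ => Or.inr hp.le).continuousOn.integrableOn_compact hη.2.1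
  have int_pot {g : Euc d → ℝ} (hg : Continuous g) :
      IntegrableOn (fun x => V x * |g x| ^ p) (tsupport η) :=
    hV.integrableOn_mul hη.2.1 hη.2.2 (hg.abs.rpow_const fun _ => Or.inr hp.le).continuousOn
  have int_patch := int_pot (continuous_patch hp.le hη.1.continuous hu hf.continuous)
  rw [← integral_sub int_patch (int_pot hu),
    ← integral_add int_grad (by exact int_patch.sub (int_pot hu))]
  simp only [patchCost, mul_sub]

lemma LocBddPotential.tendsto_setIntegral_mul_norm_rpow {ι : Type*} {l : Filter ι} {F G : Type*}
    [NormedAddCommGroup F] [NormedSpace ℝ F] [ProperSpace F] [NormedAddCommGroup G]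
    {K : Set (Euc d)} (hV : LocBddPotential Ω V) (hK : IsCompact K) (hKΩ : K ⊆ Ω) (hp : 0 < p)
    {f : ι → Euc d → F} {g : Euc d → F} {h : ι → Euc d → G} {c : ℝ} (hc : 0 ≤ c)
    (hf : ∀ k, Continuous (f k)) (hg : Continuous g) (hh : ∀ k, Continuous (h k))
    (hfg : ∀ k, ∀ x ∈ K, ‖f k x - g x‖ ≤ c * ‖h k x‖)
    (hlim : Tendsto (fun k => ∫ x in K, ‖h k x‖ ^ p) l (𝓝 0)) :
    Tendsto (fun k => ∫ x in K, V x * ‖f k x‖ ^ p) l (𝓝 (∫ x in K, V x * ‖g x‖ ^ p)) := by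
  have cont {a : Euc d → F} (ha : Continuous a) :
      ContinuousOn (fun x => ‖a x‖ ^ p) K :=
    (ha.norm.rpow_const fun _ => Or.inr hp.le).continuousOn
  obtain ⟨M, hM⟩ := hV.2 K hKΩ hK
  exact tendsto_integral_mul_norm_rpow hp (ae_restrict_of_forall_mem hK.measurableSet hM)
    ((cont hg).integrableOn_compact hK) (hV.integrableOn_mul hK hKΩ (cont hg))
    (fun k => hV.integrableOn_mul hK hKΩ (cont (hf k)))
    (fun k => (cont ((hf k).sub hg)).integrableOn_compact hK)
    (tendsto_integral_norm_rpow_of_le hp.le hc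
      (fun k => ((hh k).norm.rpow_const fun _ => Or.inr hp.le).continuousOn.integrableOn_compact hK)
      (fun k => ae_restrict_of_forall_mem hK.measurableSet (hfg k)) hlim)

lemma norm_patch_sub_patch_le (hp : 0 ≤ p) {w : Euc d → ℝ} {x : Euc d} (hη₁ : |η x| ≤ 1) :
    ‖patch p η u f x - patch p η w f x‖ ≤ 1 * ‖u x - w x‖ := by
  have : patch p η u f x - patch p η w f x = (1 - |η x| ^ p) * (u x - w x) := by
    unfold patch; ring
  have : |η x| ^ p ≤ 1 := Real.rpow_le_one (abs_nonneg _) hη₁ hp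
  have : 0 ≤ |η x| ^ p := by positivity
  simp only [*, norm_mul]
  gcongr
  rw [Real.norm_of_nonneg] <;> linarith

lemma norm_patchGradient_sub_patchGradient_le (hp : 0 ≤ p) {w : Euc d → ℝ} {x : Euc d} {C : ℝ}
    (hC : ‖gradient η x‖ ≤ C) :
    ‖patchGradient p η u f x - patchGradient p η w f x‖ ≤ p * C * ‖u x - w x‖ := by
  have : patchGradient p η u f x - patchGradient p η w f x =
      (-(p * (u x - w x))) • gradient η x := by unfold patchGradient; module
  rw [this, norm_smul, norm_neg, norm_mul, Real.norm_of_nonneg hp, mul_right_comm]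
  gcongr

lemma tendsto_patchCost {ι : Type*} {l : Filter ι} (hp : 1 < p) (hV : LocBddPotential Ω V)
    (hη : IsC1TestFun Ω η) (hη₁ : ∀ x, |η x| ≤ 1) {u : ι → Euc d → ℝ} {w : Euc d → ℝ}
    (hu : ∀ k, Continuous (u k)) (hw : Continuous w) (hf : ContDiff ℝ 1 f)
    (hlim : Tendsto (fun k => ∫ x in tsupport η, |u k x - w x| ^ p) l (𝓝 0)) :
    Tendsto (fun k => patchCost V p η (u k) f) l (𝓝 (patchCost V p η w f)) := by
  have hp₀ : 0 < p := zero_lt_one.trans hp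
  have hT : IsCompact (tsupport η) := hη.2.1
  have one_bdd : LocBddPotential Ω fun _ => 1 := ⟨measurable_const, fun _ _ _ => ⟨1, by simp⟩⟩
  obtain ⟨C, hC⟩ := hT.exists_bound_of_continuousOn (continuous_gradient hη.1).continuousOn
  have lim_grad := one_bdd.tendsto_setIntegral_mul_norm_rpow hT hη.2.2 hp₀
    (mul_nonneg hp₀.le (le_max_right C 0)) (fun k => continuous_patchGradient hη.1 (hu k) hf)
    (continuous_patchGradient hη.1 hw hf) (fun k => (hu k).sub hw)
    (fun k x hx => norm_patchGradient_sub_patchGradient_le hp₀.le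
      ((hC x hx).trans (le_max_left C 0))) hlim
  have lim_patch := hV.tendsto_setIntegral_mul_norm_rpow hT hη.2.2 hp₀ zero_le_one
    (fun k => continuous_patch hp₀.le hη.1.continuous (hu k) hf.continuous)
    (continuous_patch hp₀.le hη.1.continuous hw hf.continuous) (fun k => (hu k).sub hw)
    (fun k x _ => norm_patch_sub_patch_le hp₀.le (hη₁ x)) hlim
  have lim_pot := hV.tendsto_setIntegral_mul_norm_rpow hT hη.2.2 hp₀ zero_le_one hu hw
    (fun k => (hu k).sub hw) (fun k x _ => (one_mul _).ge) hlim
  simp only [one_mul] at lim_grad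
  rw [patchCost_eq hp₀ hV hη hw hf]
  simp only [fun k => patchCost_eq hp₀ hV hη (hu k) hf]
  exact lim_grad.add (lim_patch.sub lim_pot)

lemma exists_setIntegral_norm_gradient_rpow_le (hΩ : IsOpen Ω) (hp : 1 < p)
    (hV : LocBddPotential Ω V) (hQ : ∀ u, IsTestFun Ω u → 0 ≤ energyQ Ω V p u)
    {u : ℕ → Euc d → ℝ} {v : Euc d → ℝ} {e : ℝ} (hu : ∀ k, IsC1TestFun Ω (u k))
    (hE : Tendsto (fun k => energyQ Ω V p (u k)) atTop (𝓝 e)) (hv : ContDiffOn ℝ 1 v Ω)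
    (hlim : ∀ K ⊆ Ω, IsCompact K → Tendsto (fun k => ∫ x in K, |u k x - v x| ^ p) atTop (𝓝 0))
    {K : Set (Euc d)} (hK : IsCompact K) (hKΩ : K ⊆ Ω) :
    ∃ C, ∀ k, ∫ x in K, ‖gradient (u k) x‖ ^ p ≤ C := by
  have hp₀ : 0 < p := zero_lt_one.trans hp
  obtain ⟨η, hη, hη₁, hηK⟩ := exists_isTestFun_eventually_eq_one hΩ hK hKΩ
  have hη_le (x : Euc d) : |η x| ≤ 1 := abs_le.2 ⟨by linarith [(hη₁ x).1], (hη₁ x).2⟩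
  obtain ⟨w, hw, hwv⟩ := exists_isC1TestFun_eventuallyEq hΩ hη.2.1.isCompact hη.2.2 hv
  have hwlim : Tendsto (fun k => ∫ x in tsupport η, |u k x - w x| ^ p) atTop (𝓝 0) := by
    refine (hlim _ hη.2.2 hη.2.1).congr fun k => setIntegral_congr_fun hη.2.1.measurableSet ?_
    intro x hx
    simp only [hwv.self_of_nhdsSet hx]
  obtain ⟨C, hC⟩ := (hE.add (tendsto_patchCost hp hV hη.isC1TestFun hη_le
    (fun k => (hu k).1.continuous) hw.1.continuous contDiff_const hwlim)).bddAbove_range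
  refine ⟨C, fun k => le_trans ?_ ((setIntegral_abs_rpow_mul_norm_gradient_rpow_le hΩ hp hV hQ
    hη.isC1TestFun hη_le (hu k) (contDiff_const (c := (0 : ℝ)))).trans (hC ⟨k, rfl⟩))⟩
  have cont : Continuous fun x => ‖gradient (u k) x‖ ^ p :=
    (continuous_gradient (hu k).1).norm.rpow_const fun _ => Or.inr hp₀.le
  have hη_one {x : Euc d} (hx : x ∈ K) : η x = 1 := hηK.self_of_nhdsSet x hx
  calc ∫ x in K, ‖gradient (u k) x‖ ^ p
      = ∫ x in K, |η x| ^ p * ‖gradient (u k) x‖ ^ p :=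
        setIntegral_congr_fun hK.measurableSet fun x hx => by simp [hη_one hx]
    _ ≤ _ := setIntegral_mono_set
        (((hη.1.continuous.abs.rpow_const fun _ => Or.inr hp₀.le).mul
          cont).continuousOn.integrableOn_compact hη.2.1)
        (Eventually.of_forall fun x => by positivity)
        (LE.le.eventuallyLE fun x hx =>
          subset_tsupport η (by simp [hη_one hx]))

end PatchCost

/-! ### Weak convergence of gradients -/

section WeakConvergence

lemma abs_integral_mul_le_of_forall_notMem {α : Type*} {_ : MeasurableSpace α} {μ : Measure α}
    {K : Set α} (hK : MeasurableSet K) {f a : α → ℝ} {δ : ℝ} (ha : IntegrableOn a K μ)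
    (hf₀ : ∀ x ∉ K, f x = 0) (hf : ∀ x ∈ K, |f x| ≤ δ) :
    |∫ x, f x * a x ∂μ| ≤ δ * ∫ x in K, |a x| ∂μ := by
  rw [← setIntegral_eq_integral_of_forall_compl_eq_zero (s := K) fun x hx => by simp [hf₀ x hx],
    ← integral_const_mul]
  rw [← Real.norm_eq_abs]
  refine norm_integral_le_of_norm_le (ha.abs.const_mul δ) ?_
  filter_upwards [ae_restrict_mem hK] with x hx
  rw [norm_mul]
  exact mul_le_mul_of_nonneg_right (hf x hx) (abs_nonneg _)

variable {E : Type*} [NormedAddCommGroup E] [MeasurableSpace E] [BorelSpace E] {μ : Measure E}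
  {ι : Type*} {l : Filter ι} {K : Set E} {h : ι → E → ℝ}

section Normed

variable [NormedSpace ℝ E] [FiniteDimensional ℝ E]

lemma exists_contDiff_forall_abs_integral_sub_mul_lt (hK : IsCompact K) {f : E → ℝ}
    (hf : Continuous f) (hfK : tsupport f ⊆ K) (A : ℝ) {ε : ℝ} (hε : 0 < ε) :
    ∃ g : E → ℝ, ContDiff ℝ 1 g ∧ tsupport g ⊆ K ∧ ∀ a : E → ℝ, IntegrableOn a K μ →
      ∫ x in K, |a x| ∂μ ≤ A → |∫ x, (f x - g x) * a x ∂μ| < ε := by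
  obtain ⟨g, hg, hgf, hg_supp⟩ := hf.exists_contDiff_approx 1
    (ε := fun _ => ε / (|A| + 1)) continuous_const fun _ => by positivity
  have hgK : tsupport g ⊆ K := (closure_mono hg_supp).trans hfK
  refine ⟨g, hg, hgK, fun a ha haA => ?_⟩
  refine (abs_integral_mul_le_of_forall_notMem hK.measurableSet ha (fun x hx => ?_)
    (fun x _ => (dist_comm (f x) (g x)).trans_le (hgf x).le)).trans_lt ?_
  · rw [image_eq_zero_of_notMem_tsupport fun hx' => hx (hfK hx'),
      image_eq_zero_of_notMem_tsupport fun hx' => hx (hgK hx'), sub_zero]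
  · calc ε / (|A| + 1) * ∫ x in K, |a x| ∂μ
        < ε / (|A| + 1) * (|A| + 1) := by gcongr; linarith [le_abs_self A]
      _ = ε := by field_simp

variable [μ.IsAddHaarMeasure]

lemma tendsto_integral_mul_fderiv_of_contDiff (hK : IsCompact K) {g : E → ℝ}
    (hg : ContDiff ℝ 1 g) (hgK : tsupport g ⊆ K) (hh : ∀ k, ContDiff ℝ 1 (h k))
    (hlim : Tendsto (fun k => ∫ x in K, |h k x| ∂μ) l (𝓝 0)) (e : E) :
    Tendsto (fun k => ∫ x, g x * fderiv ℝ (h k) x e ∂μ) l (𝓝 0) := by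
  have hg_supp : HasCompactSupport g := hK.of_isClosed_subset (isClosed_tsupport g) hgK
  have cont {f : E → ℝ} (hf : ContDiff ℝ 1 f) : Continuous fun x => fderiv ℝ f x e :=
    (hf.continuous_fderiv one_ne_zero).clm_apply continuous_const
  have by_parts (k : ι) :
      ∫ x, g x * fderiv ℝ (h k) x e ∂μ = -∫ x, fderiv ℝ g x e * h k x ∂μ :=
    integral_mul_fderiv_eq_neg_fderiv_mul_of_integrable
      (((cont hg).mul (hh k).continuous).integrable_of_hasCompactSupport
        (hg_supp.fderiv_apply ℝ e).mul_right)
      ((hg.continuous.mul (cont (hh k))).integrable_of_hasCompactSupport hg_supp.mul_right)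
      ((hg.continuous.mul (hh k).continuous).integrable_of_hasCompactSupport hg_supp.mul_right)
      (fun x _ => hg.differentiable one_ne_zero x) fun x _ => (hh k).differentiable one_ne_zero x
  obtain ⟨M, hM⟩ := hK.exists_bound_of_continuousOn (cont hg).continuousOn
  have lim := hlim.const_mul M
  rw [mul_zero] at lim
  refine squeeze_zero_norm (fun k => ?_) lim
  rw [by_parts, norm_neg]
  refine abs_integral_mul_le_of_forall_notMem hK.measurableSet
    ((hh k).continuous.continuousOn.integrableOn_compact hK) (fun x hx => ?_) hM
  rw [fderiv_of_notMem_tsupport ℝ fun hx' => hx (hgK hx'), zero_apply]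

lemma tendsto_integral_mul_fderiv (hK : IsCompact K) {f : E → ℝ} (hf : Continuous f)
    (hfK : tsupport f ⊆ K) (hh : ∀ k, ContDiff ℝ 1 (h k))
    (hlim : Tendsto (fun k => ∫ x in K, |h k x| ∂μ) l (𝓝 0)) {C : ℝ}
    (hC : ∀ k, ∫ x in K, ‖fderiv ℝ (h k) x‖ ∂μ ≤ C) (e : E) :
    Tendsto (fun k => ∫ x, f x * fderiv ℝ (h k) x e ∂μ) l (𝓝 0) := by
  rw [tendsto_zero_iff_norm_tendsto_zero, tendsto_order]
  refine ⟨fun _ ha => Eventually.of_forall fun _ => ha.trans_le (norm_nonneg _), fun ε hε => ?_⟩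
  obtain ⟨g, hg, hgK, approx⟩ :=
    exists_contDiff_forall_abs_integral_sub_mul_lt (μ := μ) hK hf hfK (C * ‖e‖) (half_pos hε)
  have cont (k : ι) : Continuous fun x => fderiv ℝ (h k) x e :=
    ((hh k).continuous_fderiv one_ne_zero).clm_apply continuous_const
  have integrableOn (k : ι) := (cont k).continuousOn.integrableOn_compact (μ := μ) hK
  have gradient_bound (k : ι) : ∫ x in K, |fderiv ℝ (h k) x e| ∂μ ≤ C * ‖e‖ := by
    refine le_trans ?_ (mul_le_mul_of_nonneg_right (hC k) (norm_nonneg e))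
    rw [← integral_mul_const]
    exact integral_mono (integrableOn k).abs
      ((((hh k).continuous_fderiv one_ne_zero).norm.mul
        continuous_const).continuousOn.integrableOn_compact hK)
      fun x => (fderiv ℝ (h k) x).le_opNorm e
  have integrable {f : E → ℝ} (hf : Continuous f) (hfK : tsupport f ⊆ K) (k : ι) :
      Integrable (fun x => f x * fderiv ℝ (h k) x e) μ :=
    (hf.mul (cont k)).integrable_of_hasCompactSupport
      (HasCompactSupport.mul_right (hK.of_isClosed_subset (isClosed_tsupport f) hfK))
  filter_upwards [(tendsto_integral_mul_fderiv_of_contDiff hK hg hgK hh hlim e).norm.eventually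
    (gt_mem_nhds (by rw [norm_zero]; exact half_pos hε))] with k hk
  have split : ∫ x, f x * fderiv ℝ (h k) x e ∂μ =
      (∫ x, (f x - g x) * fderiv ℝ (h k) x e ∂μ) + ∫ x, g x * fderiv ℝ (h k) x e ∂μ := by
    simp only [sub_mul]
    rw [integral_sub (integrable hf hfK k) (integrable hg.continuous hgK k), sub_add_cancel]
  rw [split, ← add_halves ε]
  exact (norm_add_le _ _).trans_lt (add_lt_add (approx _ (integrableOn k) (gradient_bound k)) hk)

end Normed

variable [InnerProductSpace ℝ E] [FiniteDimensional ℝ E] [μ.IsAddHaarMeasure]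

lemma tendsto_integral_inner_gradient (hK : IsCompact K) {F : E → E} (hF : Continuous F)
    (hFK : tsupport F ⊆ K) (hh : ∀ k, ContDiff ℝ 1 (h k))
    (hlim : Tendsto (fun k => ∫ x in K, |h k x| ∂μ) l (𝓝 0)) {C : ℝ}
    (hC : ∀ k, ∫ x in K, ‖gradient (h k) x‖ ∂μ ≤ C) :
    Tendsto (fun k => ∫ x, ⟪F x, gradient (h k) x⟫ ∂μ) l (𝓝 0) := by
  set b := stdOrthonormalBasis ℝ E
  have coord_cont (i) : Continuous fun x => ⟪F x, b i⟫ := hF.inner continuous_const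
  have coord_supp (i) : tsupport (fun x => ⟪F x, b i⟫) ⊆ K :=
    (closure_mono (Function.support_subset_iff'.2 fun x hx => by
      rw [Function.notMem_support.1 hx, inner_zero_left])).trans hFK
  have hC' (k : ι) : ∫ x in K, ‖fderiv ℝ (h k) x‖ ∂μ ≤ C := by
    simpa only [gradient, LinearIsometryEquiv.norm_map] using hC k
  have lim := tendsto_finsetSum Finset.univ fun i _ =>
    tendsto_integral_mul_fderiv hK (coord_cont i) (coord_supp i) hh hlim hC' (b i)
  rw [Finset.sum_const_zero] at lim
  refine lim.congr fun k => ?_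
  rw [← integral_finsetSum]
  · refine integral_congr_ae (Eventually.of_forall fun x => ?_)
    simp only [← b.sum_inner_mul_inner (F x) (gradient (h k) x),
      ← inner_gradient_left, real_inner_comm]
  · exact fun i _ => ((coord_cont i).mul (((hh k).continuous_fderiv one_ne_zero).clm_apply
      continuous_const)).integrable_of_hasCompactSupport
        (HasCompactSupport.mul_right (hK.of_isClosed_subset (isClosed_tsupport _) (coord_supp i)))

lemma tendsto_integral_inner_gradient_sub {p : ℝ} (hp : 1 ≤ p) (hK : IsCompact K) {F : E → E}
    (hF : Continuous F) (hFK : tsupport F ⊆ K) {u : ι → E → ℝ} {w : E → ℝ}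
    (hu : ∀ k, ContDiff ℝ 1 (u k)) (hw : ContDiff ℝ 1 w)
    (hlim : Tendsto (fun k => ∫ x in K, |u k x - w x| ^ p ∂μ) l (𝓝 0)) {C : ℝ}
    (hC : ∀ k, ∫ x in K, ‖gradient (u k) x‖ ^ p ∂μ ≤ C) :
    Tendsto (fun k => ∫ x, ⟪F x, gradient (u k) x - gradient w x⟫ ∂μ) l (𝓝 0) := by
  have hp₀ : 0 ≤ p := zero_le_one.trans hp
  have : IsFiniteMeasure (μ.restrict K) := ⟨by simpa using hK.measure_lt_top⟩
  have gradient_int {f : E → ℝ} (hf : ContDiff ℝ 1 f) : IntegrableOn (gradient f) K μ :=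
    (continuous_gradient hf).continuousOn.integrableOn_compact hK
  have gradient_sub (k : ι) :
      gradient (fun y => u k y - w y) = fun x => gradient (u k) x - gradient w x :=
    funext fun x => (hasGradientAt_sub (hasGradientAt_of_contDiff (hu k) x)
      (hasGradientAt_of_contDiff hw x)).gradient
  have u_bound (k : ι) : ∫ x in K, ‖gradient (u k) x‖ ∂μ ≤ (μ.restrict K).real Set.univ + C :=
    (integral_norm_le_measureReal_add hp (gradient_int (hu k)) (((continuous_gradient
      (hu k)).norm.rpow_const fun _ => Or.inr hp₀).continuousOn.integrableOn_compact hK)).trans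
        (by gcongr; exact hC k)
  have bound (k : ι) : ∫ x in K, ‖gradient (fun y => u k y - w y) x‖ ∂μ ≤
      ((μ.restrict K).real Set.univ + C) + ∫ x in K, ‖gradient w x‖ ∂μ := by
    refine le_trans ?_ (add_le_add_left (u_bound k) _)
    rw [← integral_add (gradient_int (hu k)).norm (gradient_int hw).norm, gradient_sub]
    exact integral_mono ((gradient_int (hu k)).sub (gradient_int hw)).norm
      ((gradient_int (hu k)).norm.add (gradient_int hw).norm) fun x => norm_sub_le _ _
  have lim : Tendsto (fun k => ∫ x in K, |u k x - w x| ∂μ) l (𝓝 0) := by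
    have cont (k : ι) : Continuous fun x => u k x - w x := (hu k).continuous.sub hw.continuous
    exact tendsto_integral_norm_of_rpow hp
      (fun k => (cont k).continuousOn.integrableOn_compact hK) (fun k => ((cont k).norm.rpow_const
        fun _ => Or.inr hp₀).continuousOn.integrableOn_compact hK) hlim
  simpa only [gradient_sub] using
    tendsto_integral_inner_gradient hK hF hFK (fun k => (hu k).sub hw) lim bound

lemma setIntegral_mul_norm_gradient_rpow_le_of_tendsto [l.NeBot] {p : ℝ} (hp : 1 < p)
    (hK : IsCompact K) {χ : E → ℝ} (hχ : Continuous χ) (hχ₀ : ∀ x, 0 ≤ χ x) (hχK : tsupport χ ⊆ K)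
    {u : ι → E → ℝ} {w : E → ℝ} (hu : ∀ k, ContDiff ℝ 1 (u k)) (hw : ContDiff ℝ 1 w)
    (hlim : Tendsto (fun k => ∫ x in K, |u k x - w x| ^ p ∂μ) l (𝓝 0)) {C : ℝ}
    (hC : ∀ k, ∫ x in K, ‖gradient (u k) x‖ ^ p ∂μ ≤ C) {a : ι → ℝ} {b : ℝ}
    (ha : ∀ k, ∫ x in K, χ x * ‖gradient (u k) x‖ ^ p ∂μ ≤ a k) (hab : Tendsto a l (𝓝 b)) :
    ∫ x in K, χ x * ‖gradient w x‖ ^ p ∂μ ≤ b := by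
  have hp₀ : 0 < p := zero_lt_one.trans hp
  set F : E → E := fun x => (p * χ x) • pFlux p (gradient w x)
  have hF : Continuous F :=
    (continuous_const.mul hχ).smul ((continuous_pFlux hp).comp (continuous_gradient hw))
  have hF₀ (x : E) (hx : x ∉ K) : F x = 0 := by
    simp [F, image_eq_zero_of_notMem_tsupport fun hx' => hx (hχK hx')]
  have hFK : tsupport F ⊆ K := closure_minimal (Function.support_subset_iff'.2 hF₀) hK.isClosed
  have int_rpow {f : E → ℝ} (hf : ContDiff ℝ 1 f) :
      IntegrableOn (fun x => χ x * ‖gradient f x‖ ^ p) K μ :=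
    (hχ.mul ((continuous_gradient hf).norm.rpow_const
      fun _ => Or.inr hp₀.le)).continuousOn.integrableOn_compact hK
  have int_inner (k : ι) : IntegrableOn (fun x => ⟪F x, gradient (u k) x - gradient w x⟫) K μ :=
    (hF.inner ((continuous_gradient (hu k)).sub
      (continuous_gradient hw))).continuousOn.integrableOn_compact hK
  have lower (k : ι) : (∫ x in K, χ x * ‖gradient w x‖ ^ p ∂μ) +
      ∫ x, ⟪F x, gradient (u k) x - gradient w x⟫ ∂μ ≤ a k := by
    refine le_trans ?_ (ha k)
    rw [← setIntegral_eq_integral_of_forall_compl_eq_zero (s := K) (f := fun x => ⟪F x, _⟫)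
      fun x hx => by rw [hF₀ x hx, inner_zero_left], ← integral_add (int_rpow hw) (int_inner k)]
    refine integral_mono ((int_rpow hw).add (int_inner k)) (int_rpow (hu k)) fun x => ?_
    have := mul_nonneg (hχ₀ x)
      (convexityDefect_nonneg hp (gradient w x) (gradient (u k) x - gradient w x))
    rw [convexityDefect, add_sub_cancel] at this
    simp only [F, real_inner_smul_left]
    linarith
  simpa using le_of_tendsto_of_tendsto'
    ((tendsto_integral_inner_gradient_sub hp.le hK hF hFK hu hw hlim hC).const_add _) hab lower

end WeakConvergence

/-! ### Ground states are weak solutions -/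

section GroundState

variable {d : ℕ} {Ω S : Set (Euc d)} {p : ℝ} {V η w φ : Euc d → ℝ}

lemma patchCost_add_sub (hS : IsCompact S) (hp : 1 < p) (hV : LocBddPotential Ω V)
    (hη : IsC1TestFun Ω η) (hηS : ∀ᶠ x in 𝓝ˢ S, η x = 1) (hw : ContDiff ℝ 1 w)
    (hφ : ContDiff ℝ 1 φ) (hφS : tsupport φ ⊆ S) :
    patchCost V p η w (w + φ) - ∫ x in tsupport η, |η x| ^ p * ‖gradient w x‖ ^ p =
      energyQ S V p (w + φ) - energyQ S V p w := by
  have hp₀ : 0 < p := zero_lt_one.trans hp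
  have hT : IsCompact (tsupport η) := hη.2.1
  have hST : S ⊆ tsupport η := fun x hx =>
    subset_tsupport η (by simp [hηS.self_of_nhdsSet x hx])
  have hwφ : ContDiff ℝ 1 (w + φ) := hw.add hφ
  have rpow_cont {F : Type} [NormedAddCommGroup F] {g : Euc d → F} (hg : Continuous g) :
      Continuous fun x => ‖g x‖ ^ p := hg.norm.rpow_const fun _ => Or.inr hp₀.le
  have energy_int {f : Euc d → ℝ} (hf : ContDiff ℝ 1 f) :
      IntegrableOn (fun x => ‖gradient f x‖ ^ p + V x * |f x| ^ p) S :=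
    hV.integrableOn_norm_rpow_add hS (hST.trans hη.2.2) hp₀.le
      (continuous_gradient hf).continuousOn (rpow_cont hf.continuous).continuousOn
  have cost_int : IntegrableOn (fun x => ‖patchGradient p η w (w + φ) x‖ ^ p
      + V x * (|patch p η w (w + φ) x| ^ p - |w x| ^ p)) (tsupport η) :=
    hV.integrableOn_norm_rpow_add hT hη.2.2 hp₀.le
      (continuous_patchGradient hη.1 hw.continuous hwφ).continuousOn
      ((rpow_cont (continuous_patch hp₀.le hη.1.continuous hw.continuous hwφ.continuous)).sub
        (rpow_cont hw.continuous)).continuousOn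
  have gain_int : IntegrableOn (fun x => |η x| ^ p * ‖gradient w x‖ ^ p) (tsupport η) :=
    ((rpow_cont hη.1.continuous).mul
      (rpow_cont (continuous_gradient hw))).continuousOn.integrableOn_compact hT
  have gradient_add (x : Euc d) : gradient (w + φ) x = gradient w x + gradient φ x :=
    (hasGradientAt_add (hasGradientAt_of_contDiff hw x) (hasGradientAt_of_contDiff hφ x)).gradient
  rw [patchCost, energyQ, energyQ, ← integral_sub cost_int gain_int,
    ← integral_sub (energy_int hwφ) (energy_int hw)]
  refine (setIntegral_eq_of_subset_of_forall_sdiff_eq_zero hT.measurableSet hST fun x hx =>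
    ?_).trans (setIntegral_congr_fun hS.measurableSet fun x hx => ?_)
  · have hxφ : x ∉ tsupport φ := fun h => hx.2 (hφS h)
    simp [patch, patchGradient, gradient_add, image_eq_zero_of_notMem_tsupport hxφ,
      gradient_eq_zero_of_notMem_tsupport hxφ, norm_smul, Real.mul_rpow]
  · have hη_one : η =ᶠ[𝓝 x] fun _ => 1 := eventually_nhdsSet_iff_forall.1 hηS x hx
    have hη_grad : gradient η x = 0 := by rw [hη_one.gradient_eq, gradient_fun_const]
    simp [patch, patchGradient, hη_one.eq_of_nhds, hη_grad]
    ring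

lemma energyQ_le_energyQ_add_of_tendsto (hΩ : IsOpen Ω) (hS : IsCompact S) (hp : 1 < p)
    (hV : LocBddPotential Ω V) (hQ : ∀ u, IsTestFun Ω u → 0 ≤ energyQ Ω V p u)
    (hη : IsC1TestFun Ω η) (hη₁ : ∀ x, |η x| ≤ 1) (hηS : ∀ᶠ x in 𝓝ˢ S, η x = 1)
    {ι : Type*} {l : Filter ι} [l.NeBot] {u : ι → Euc d → ℝ} (hu : ∀ k, IsC1TestFun Ω (u k))
    (hE : Tendsto (fun k => energyQ Ω V p (u k)) l (𝓝 0)) (hw : ContDiff ℝ 1 w)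
    (hlim : Tendsto (fun k => ∫ x in tsupport η, |u k x - w x| ^ p) l (𝓝 0)) {C : ℝ}
    (hC : ∀ k, ∫ x in tsupport η, ‖gradient (u k) x‖ ^ p ≤ C)
    (hφ : ContDiff ℝ 1 φ) (hφS : tsupport φ ⊆ S) :
    energyQ S V p w ≤ energyQ S V p (w + φ) := by
  have hp₀ : 0 < p := zero_lt_one.trans hp
  have weight_supp : tsupport (fun x => |η x| ^ p) ⊆ tsupport η :=
    closure_mono (Function.support_subset_iff'.2 fun x hx => by
      simp [Function.notMem_support.1 hx, hp₀.ne'])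
  have lsc := setIntegral_mul_norm_gradient_rpow_le_of_tendsto hp hη.2.1
    (hη.1.continuous.abs.rpow_const fun _ => Or.inr hp₀.le) (fun x => by positivity) weight_supp
    (fun k => (hu k).1) hw hlim hC
    (fun k => setIntegral_abs_rpow_mul_norm_gradient_rpow_le hΩ hp hV hQ hη hη₁ (hu k)
      (hw.add hφ))
    (hE.add (tendsto_patchCost hp hV hη hη₁ (fun k => (hu k).1.continuous) hw.continuous
      (hw.add hφ) hlim))
  have := patchCost_add_sub hS hp hV hη hηS hw hφ hφS
  change ∫ x in tsupport η, |η x| ^ p * ‖gradient w x‖ ^ p ≤ 0 + patchCost V p η w (w + φ) at lsc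
  linarith

lemma hasDerivAt_energyQ_add_smul (hS : IsCompact S) (hSΩ : S ⊆ Ω) (hp : 1 < p)
    (hV : LocBddPotential Ω V) (hw : ContDiff ℝ 1 w) (hφ : ContDiff ℝ 1 φ) :
    HasDerivAt (fun t : ℝ => energyQ S V p (w + t • φ))
      (p * ∫ x in S, (⟪pFlux p (gradient w x), gradient φ x⟫ + V x * (pFlux p (w x) * φ x))) 0 := by
  have : IsFiniteMeasure (volume.restrict S) := ⟨by simpa using hS.measure_lt_top⟩
  have bound {F : Type} [NormedAddCommGroup F] {g : Euc d → F} (hg : Continuous g) :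
      ∃ B, ∀ᵐ x ∂volume.restrict S, ‖g x‖ ≤ B :=
    (hS.exists_bound_of_continuousOn hg.continuousOn).imp
      fun _ hB => ae_restrict_of_forall_mem hS.measurableSet hB
  obtain ⟨M, hM⟩ := hV.2 S hSΩ hS
  obtain ⟨A, hA⟩ := bound hw.continuous
  obtain ⟨A', hA'⟩ := bound (continuous_gradient hw)
  obtain ⟨B, hB⟩ := bound hφ.continuous
  obtain ⟨B', hB'⟩ := bound (continuous_gradient hφ)
  have deriv_grad := hasDerivAt_integral_mul_norm_add_smul_rpow (μ := volume.restrict S)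
    (V := fun _ => 1) (M := 1) hp aestronglyMeasurable_const
    (continuous_gradient hw).aestronglyMeasurable (continuous_gradient hφ).aestronglyMeasurable
    (by simp) hA' hB'
  have deriv_pot := hasDerivAt_integral_mul_norm_add_smul_rpow (μ := volume.restrict S) hp
    hV.1.aestronglyMeasurable hw.continuous.aestronglyMeasurable
    hφ.continuous.aestronglyMeasurable (ae_restrict_of_forall_mem hS.measurableSet hM) hA hB
  have flux_int : IntegrableOn (fun x => ⟪pFlux p (gradient w x), gradient φ x⟫) S :=
    (((continuous_pFlux hp).comp (continuous_gradient hw)).inner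
      (continuous_gradient hφ)).continuousOn.integrableOn_compact hS
  have pot_int : IntegrableOn (fun x => V x * (pFlux p (w x) * φ x)) S :=
    hV.integrableOn_mul hS hSΩ
      (((continuous_pFlux hp).comp hw.continuous).mul hφ.continuous).continuousOn
  refine ((deriv_grad.add deriv_pot).congr_deriv ?_).congr_of_eventuallyEq
    (Eventually.of_forall fun t => ?_)
  · rw [integral_add flux_int pot_int, mul_add, ← integral_const_mul, ← integral_const_mul]
    simp only [one_mul, RCLike.inner_apply', conj_trivial, mul_left_comm p]
  · have hwφ : ContDiff ℝ 1 (w + t • φ) := hw.add (hφ.const_smul t)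
    refine (energyQ_eq_add hV hS hSΩ (zero_lt_one.trans hp).le hwφ).trans ?_
    simp [gradient_add_smul hw hφ]

lemma IsGroundState.isPositiveSolution {v : Euc d → ℝ} (hv : IsGroundState Ω V p v)
    (hΩ : IsOpen Ω) (hp : 1 < p) (hV : LocBddPotential Ω V)
    (hQ : ∀ u, IsTestFun Ω u → 0 ≤ energyQ Ω V p u) : IsPositiveSolution Ω V p v := by
  obtain ⟨hv₁, hv₀, u, ⟨hu, -, B, -, -, -, -, hE⟩, hlim⟩ := hv
  refine ⟨hv₁, hv₀, fun φ hφ => ?_⟩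
  have hS : IsCompact (tsupport φ) := hφ.2.1
  have hφ₁ : ContDiff ℝ 1 φ := hφ.isC1TestFun.1
  have hu₁ (k : ℕ) : IsC1TestFun Ω (u k) := (hu k).isC1TestFun
  obtain ⟨η, hη, hη₁, hηS⟩ := exists_isTestFun_eventually_eq_one hΩ hS hφ.2.2
  have hT : IsCompact (tsupport η) := hη.2.1
  have hST : tsupport φ ⊆ tsupport η := fun x hx =>
    subset_tsupport η (by simp [hηS.self_of_nhdsSet x hx])
  obtain ⟨w, hw, hwv⟩ := exists_isC1TestFun_eventuallyEq hΩ hT hη.2.2 hv₁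
  obtain ⟨C, hC⟩ := exists_setIntegral_norm_gradient_rpow_le hΩ hp hV hQ hu₁ hE hv₁ hlim hT hη.2.2
  have hwlim : Tendsto (fun k => ∫ x in tsupport η, |u k x - w x| ^ p) atTop (𝓝 0) :=
    (hlim _ hη.2.2 hT).congr fun k => setIntegral_congr_fun hT.measurableSet fun x hx => by
      simp only [hwv.self_of_nhdsSet hx]
  have minimal (t : ℝ) : energyQ (tsupport φ) V p w ≤ energyQ (tsupport φ) V p (w + t • φ) :=
    energyQ_le_energyQ_add_of_tendsto hΩ hS hp hV hQ hη.isC1TestFun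
      (fun x => abs_le.2 ⟨by linarith [(hη₁ x).1], (hη₁ x).2⟩) hηS hu₁ hE hw.1 hwlim hC
      (hφ₁.const_smul t) (closure_mono (Function.support_const_smul_subset t φ))
  have isLocalMin : IsLocalMin (fun t : ℝ => energyQ (tsupport φ) V p (w + t • φ)) 0 :=
    Eventually.of_forall fun t => by simpa using minimal t
  have weak := (mul_eq_zero.1 (isLocalMin.hasDerivAt_eq_zero
    (hasDerivAt_energyQ_add_smul hS hφ.2.2 hp hV hw.1 hφ₁))).resolve_left (by positivity)
  rw [← weak]
  refine (setIntegral_eq_of_subset_of_forall_sdiff_eq_zero hΩ.measurableSet hφ.2.2 fun x hx =>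
    ?_).trans (setIntegral_congr_fun hS.measurableSet fun x hx => ?_)
  · simp [image_eq_zero_of_notMem_tsupport hx.2, gradient_eq_zero_of_notMem_tsupport hx.2]
  · have eq_near : w =ᶠ[𝓝 x] v := eventually_nhdsSet_iff_forall.1 hwv x (hST hx)
    have hvx : 0 < v x := hv₀ x (hφ.2.2 hx)
    simp only [eq_near.gradient_eq, eq_near.eq_of_nhds, inner_pFlux_left, pFlux_of_pos p hvx,
      mul_assoc]

lemma IsPositiveSolution.isPositiveSupersolution {v : Euc d → ℝ} (hv : IsPositiveSolution Ω V p v) :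
    IsPositiveSupersolution Ω V p v :=
  ⟨hv.1, hv.2.1, fun φ hφ _ => (hv.2.2 φ hφ).ge⟩

end GroundState

/-! ### Picone's identity -/

section Picone

variable {d : ℕ} {Ω K : Set (Euc d)} {p : ℝ} {V v w : Euc d → ℝ}

lemma norm_smul_add_smul_rpow_eq {E : Type*} [NormedAddCommGroup E] [InnerProductSpace ℝ E]
    (hp : p ≠ 0) (s t : ℝ) (a b : E) :
    ‖s • a + t • b‖ ^ p = ⟪pFlux p a, |s| ^ p • a + t • (p * pFlux p s) • b⟫
      + convexityDefect p (s • a) (t • b) := by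
  have norm_smul_rpow : ‖s • a‖ ^ p = |s| ^ p * ‖a‖ ^ p := by
    rw [norm_smul, Real.mul_rpow (norm_nonneg _) (norm_nonneg _), Real.norm_eq_abs]
  rw [convexityDefect, norm_smul_rpow, ← inner_pFlux_self hp a, pFlux_smul]
  simp only [inner_add_right, inner_smul_left, inner_smul_right, conj_trivial]
  ring

lemma norm_gradient_mul_rpow_eq {E : Type*} [NormedAddCommGroup E] [InnerProductSpace ℝ E]
    [CompleteSpace E] {v w : E → ℝ} {x : E} (hp : 1 < p) (hv : DifferentiableAt ℝ v x)
    (hw : DifferentiableAt ℝ w x) :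
    ‖gradient (fun y => w y * v y) x‖ ^ p =
      ⟪pFlux p (gradient v x), gradient (fun y => |w y| ^ p * v y) x⟫
        + convexityDefect p (w x • gradient v x) (v x • gradient w x) := by
  rw [(hasGradientAt_mul hw.hasGradientAt hv.hasGradientAt).gradient,
    (hasGradientAt_mul (hasGradientAt_abs_rpow hp hw.hasGradientAt) hv.hasGradientAt).gradient,
    norm_smul_add_smul_rpow_eq (zero_lt_one.trans hp).ne']

lemma IsC1TestFun.abs_rpow (hw : IsC1TestFun Ω w) (hp : 1 < p) :
    IsC1TestFun Ω fun x => |w x| ^ p :=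
  isC1TestFun_of_eq_zero hw.2.1 hw.2.2 (fun x _ => (hw.1.norm_rpow hp).contDiffAt) fun x hx => by
    simp [image_eq_zero_of_notMem_tsupport hx, (zero_lt_one.trans hp).ne']

lemma IsC1TestFun.integrableOn_convexityDefect (hw : IsC1TestFun Ω w) (hΩ : IsOpen Ω) (hp : 1 < p)
    (hv : ContDiffOn ℝ 1 v Ω) :
    IntegrableOn (fun x => convexityDefect p (w x • gradient v x) (v x • gradient w x)) Ω := by
  refine IntegrableOn.of_forall_sdiff_eq_zero (s := tsupport w) ?_ hΩ.measurableSet fun x hx => ?_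
  · have cont : ContinuousOn (fun x => (w x • gradient v x, v x • gradient w x)) Ω :=
      (hw.1.continuous.continuousOn.smul (continuousOn_gradient hΩ hv)).prodMk
        (hv.continuousOn.smul (continuous_gradient hw.1).continuousOn)
    exact (((continuous_convexityDefect hp).comp_continuousOn cont).mono
      hw.2.2).integrableOn_compact hw.2.1
  · rw [gradient_eq_zero_of_notMem_tsupport hx.2, smul_zero, convexityDefect_zero_right]

lemma IsPositiveSupersolution.setIntegral_convexityDefect_le
    (hv : IsPositiveSupersolution Ω V p v) (hΩ : IsOpen Ω) (hp : 1 < p)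
    (hV : LocBddPotential Ω V) (hw : IsC1TestFun Ω w) (hKΩ : K ⊆ Ω) :
    ∫ x in K, convexityDefect p (w x • gradient v x) (v x • gradient w x) ≤
      energyQ Ω V p fun x => w x * v x := by
  have defect_int := hw.integrableOn_convexityDefect hΩ hp hv.1
  have test : IsC1TestFun Ω fun x => |w x| ^ p * v x := (hw.abs_rpow hp).mul_contDiffOn hΩ hv.1
  have picone : ∀ x ∈ Ω, ⟪pFlux p (gradient v x), gradient (fun y => |w y| ^ p * v y) x⟫
      + V x * v x ^ (p - 1) * (|w x| ^ p * v x) =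
      (‖gradient (fun y => w y * v y) x‖ ^ p + V x * |w x * v x| ^ p)
        - convexityDefect p (w x • gradient v x) (v x • gradient w x) := by
    intro x hx
    have hvx : 0 < v x := hv.2.1 x hx
    have potential : |w x * v x| ^ p = v x ^ (p - 1) * (|w x| ^ p * v x) := by
      rw [abs_mul, abs_of_pos hvx, Real.mul_rpow (abs_nonneg _) hvx.le,
        Real.rpow_sub_one hvx.ne']
      field_simp
    rw [norm_gradient_mul_rpow_eq hp ((hv.1.contDiffAt (hΩ.mem_nhds hx)).differentiableAt
      one_ne_zero) (hw.1.differentiable one_ne_zero x), potential]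
    ring
  have test_nonneg (x : Euc d) : 0 ≤ |w x| ^ p * v x := by
    by_cases hx : x ∈ Ω
    · exact mul_nonneg (by positivity) (hv.2.1 x hx).le
    · simp [image_eq_zero_of_notMem_tsupport fun h => hx (hw.2.2 h), (zero_lt_one.trans hp).ne']
  have nonneg := hv.integral_nonneg hΩ hV hp test test_nonneg
  calc ∫ x in K, convexityDefect p (w x • gradient v x) (v x • gradient w x)
      ≤ ∫ x in Ω, convexityDefect p (w x • gradient v x) (v x • gradient w x) :=
        setIntegral_mono_set defect_int
          (Eventually.of_forall fun x => convexityDefect_nonneg hp _ _) hKΩ.eventuallyLE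
    _ ≤ energyQ Ω V p fun x => w x * v x := by
        rw [setIntegral_congr_fun hΩ.measurableSet picone, integral_sub
          ((hw.mul_contDiffOn hΩ hv.1).integrableOn_energyQ hΩ hV (zero_lt_one.trans hp))
          defect_int] at nonneg
        exact sub_nonneg.1 nonneg

lemma exists_norm_rpow_le_mul_convexityDefect_add {X E : Type*} [TopologicalSpace X]
    [NormedAddCommGroup E] [InnerProductSpace ℝ E] [ProperSpace E] (hp : 1 < p) {K : Set X}
    (hK : IsCompact K) {v : X → ℝ} {a : X → E} (hv : ContinuousOn v K) (hv₀ : ∀ x ∈ K, 0 < v x)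
    (ha : ContinuousOn a K) {ε : ℝ} (hε : 0 < ε) :
    ∃ C > 0, ∀ x ∈ K, ∀ (s : ℝ) (b : E),
      ‖b‖ ^ p ≤ C * convexityDefect p (s • a x) (v x • b) + ε * |s| ^ p := by
  have : 0 < p := zero_lt_one.trans hp
  obtain ⟨m, hm, hmv⟩ := hK.exists_forall_le' hv hv₀
  obtain ⟨A, hA₀, hA⟩ := (hK.image_of_continuousOn ha).isBounded.exists_pos_norm_le
  obtain ⟨C, hC, hdefect⟩ := exists_norm_rpow_le_add_mul_convexityDefect (E := E) hp
    (ε := ε * m ^ p / A ^ p) (by positivity)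
  refine ⟨C / m ^ p, by positivity, fun x hx s b => ?_⟩
  refine le_of_mul_le_mul_left ?_ (by positivity : 0 < m ^ p)
  calc m ^ p * ‖b‖ ^ p ≤ ‖v x • b‖ ^ p := by
        rw [norm_smul, Real.mul_rpow (norm_nonneg _) (norm_nonneg _),
          Real.norm_of_nonneg (hv₀ x hx).le]
        gcongr
        exact hmv x hx
    _ ≤ ε * m ^ p / A ^ p * ‖s • a x‖ ^ p + C * convexityDefect p (s • a x) (v x • b) :=
        hdefect _ _
    _ ≤ ε * m ^ p / A ^ p * (|s| ^ p * A ^ p) + C * convexityDefect p (s • a x) (v x • b) := by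
        rw [norm_smul, Real.mul_rpow (norm_nonneg _) (norm_nonneg _), Real.norm_eq_abs]
        gcongr
        exact hA _ (Set.mem_image_of_mem _ hx)
    _ = _ := by field_simp; ring

lemma IsPositiveSupersolution.exists_setIntegral_norm_gradient_rpow_le
    (hv : IsPositiveSupersolution Ω V p v) (hΩ : IsOpen Ω) (hp : 1 < p)
    (hV : LocBddPotential Ω V) (hK : IsCompact K) (hKΩ : K ⊆ Ω) {ε : ℝ} (hε : 0 < ε) :
    ∃ C > 0, ∀ w, IsC1TestFun Ω w → ∫ x in K, ‖gradient w x‖ ^ p ≤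
      C * energyQ Ω V p (fun x => w x * v x) + ε * ∫ x in K, |w x| ^ p := by
  have hp₀ : 0 < p := zero_lt_one.trans hp
  obtain ⟨C, hC, hdefect⟩ := exists_norm_rpow_le_mul_convexityDefect_add hp hK
    (hv.1.continuousOn.mono hKΩ) (fun x hx => hv.2.1 x (hKΩ hx))
    ((continuousOn_gradient hΩ hv.1).mono hKΩ) hε
  refine ⟨C, hC, fun w hw => ?_⟩
  have defect_int : IntegrableOn
      (fun x => C * convexityDefect p (w x • gradient v x) (v x • gradient w x)) K :=
    ((hw.integrableOn_convexityDefect hΩ hp hv.1).mono_set hKΩ).const_mul C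
  have w_int : IntegrableOn (fun x => ε * |w x| ^ p) K :=
    ((hw.1.continuous.abs.rpow_const
      fun _ => Or.inr hp₀.le).continuousOn.integrableOn_compact hK).const_mul ε
  have grad_int : IntegrableOn (fun x => ‖gradient w x‖ ^ p) K :=
    ((continuous_gradient hw.1).norm.rpow_const
      fun _ => Or.inr hp₀.le).continuousOn.integrableOn_compact hK
  refine (setIntegral_mono_on grad_int (defect_int.add w_int) hK.measurableSet fun x hx =>
    hdefect x hx (w x) (gradient w x)).trans ?_
  rw [integral_add' defect_int w_int, integral_const_mul, integral_const_mul]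
  gcongr
  exact hv.setIntegral_convexityDefect_le hΩ hp hV hw hKΩ

end Picone

/-! ### Poincaré inequalities -/

section MeanOscillation

variable {α : Type*} {mα : MeasurableSpace α} {μ : Measure α} {p : ℝ} {F : Type*}
  [NormedAddCommGroup F]

lemma integral_norm_add_rpow_le (hp : 1 ≤ p) {f g : α → F}
    (hf : Integrable (fun x => ‖f x‖ ^ p) μ) (hg : Integrable (fun x => ‖g x‖ ^ p) μ) :
    ∫ x, ‖f x + g x‖ ^ p ∂μ ≤ 2 ^ (p - 1) * ((∫ x, ‖f x‖ ^ p ∂μ) + ∫ x, ‖g x‖ ^ p ∂μ) := by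
  rw [← integral_add hf hg, ← integral_const_mul]
  exact integral_mono_of_nonneg (Eventually.of_forall fun x => by positivity)
    ((hf.add hg).const_mul _) (Eventually.of_forall fun x => norm_add_rpow_le hp _ _)

lemma integral_norm_sub_const_rpow_le [IsFiniteMeasure μ] (hp : 1 ≤ p) {f : α → F} (a b : F)
    (hf : Integrable (fun x => ‖f x - a‖ ^ p) μ) :
    ∫ x, ‖f x - b‖ ^ p ∂μ ≤
      2 ^ (p - 1) * ((∫ x, ‖f x - a‖ ^ p ∂μ) + ‖a - b‖ ^ p * μ.real Set.univ) := by
  simpa [mul_comm] using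
    integral_norm_add_rpow_le hp (g := fun _ => a - b) hf (integrable_const _)

lemma norm_sub_rpow_mul_measureReal_le (hp : 1 ≤ p) {f : α → F} {a b : F}
    (ha : Integrable (fun x => ‖f x - a‖ ^ p) μ) (hb : Integrable (fun x => ‖f x - b‖ ^ p) μ) :
    ‖a - b‖ ^ p * μ.real Set.univ ≤
      2 ^ (p - 1) * ((∫ x, ‖f x - a‖ ^ p ∂μ) + ∫ x, ‖f x - b‖ ^ p ∂μ) := by
  simpa [mul_comm, norm_sub_rev a] using integral_norm_add_rpow_le hp (f := fun x => a - f x)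
    (by simpa only [norm_sub_rev a] using ha) hb

lemma setIntegral_union_le {f : α → ℝ} {s t : Set α} (hf : 0 ≤ f) (hs : IntegrableOn f s μ)
    (ht : IntegrableOn f t μ) : ∫ x in s ∪ t, f x ∂μ ≤ (∫ x in s, f x ∂μ) + ∫ x in t, f x ∂μ := by
  rw [← integral_add_measure hs ht]
  exact integral_mono_measure (Measure.restrict_union_le s t) (Eventually.of_forall hf)
    (integrable_add_measure.2 ⟨hs, ht⟩)

lemma norm_sub_rpow_mul_measureReal_inter_le (hp : 1 ≤ p) {f : α → F} {a b : F} {s t : Set α}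
    (ha : IntegrableOn (fun x => ‖f x - a‖ ^ p) s μ)
    (hb : IntegrableOn (fun x => ‖f x - b‖ ^ p) t μ) :
    ‖a - b‖ ^ p * μ.real (s ∩ t) ≤
      2 ^ (p - 1) * ((∫ x in s, ‖f x - a‖ ^ p ∂μ) + ∫ x in t, ‖f x - b‖ ^ p ∂μ) := by
  have nonneg (m : F) (x : α) : 0 ≤ ‖f x - m‖ ^ p := by positivity
  calc ‖a - b‖ ^ p * μ.real (s ∩ t)
      ≤ 2 ^ (p - 1) *
          ((∫ x in s ∩ t, ‖f x - a‖ ^ p ∂μ) + ∫ x in s ∩ t, ‖f x - b‖ ^ p ∂μ) := by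
        simpa using norm_sub_rpow_mul_measureReal_le (μ := μ.restrict (s ∩ t)) hp
          (ha.mono_set Set.inter_subset_left) (hb.mono_set Set.inter_subset_right)
    _ ≤ _ := by
        gcongr ?_ * (?_ + ?_)
        · exact setIntegral_mono_set ha (Eventually.of_forall (nonneg a))
            Set.inter_subset_left.eventuallyLE
        · exact setIntegral_mono_set hb (Eventually.of_forall (nonneg b))
            Set.inter_subset_right.eventuallyLE

lemma setIntegral_union_norm_sub_const_rpow_le (hp : 1 ≤ p) {f : α → F} {a b : F} {s t : Set α}
    (hst : 0 < μ.real (s ∩ t)) (ht : μ t ≠ ⊤)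
    (ha : IntegrableOn (fun x => ‖f x - a‖ ^ p) (s ∪ t) μ)
    (hb : IntegrableOn (fun x => ‖f x - b‖ ^ p) t μ) :
    ∫ x in s ∪ t, ‖f x - a‖ ^ p ∂μ ≤
      (1 + 2 ^ (p - 1) + 2 ^ (p - 1) * (2 ^ (p - 1) * (μ.real t / μ.real (s ∩ t)))) *
        ((∫ x in s, ‖f x - a‖ ^ p ∂μ) + ∫ x in t, ‖f x - b‖ ^ p ∂μ) := by
  have : IsFiniteMeasure (μ.restrict t) := isFiniteMeasure_restrict.2 ht
  have nonneg (m : F) : 0 ≤ fun x => ‖f x - m‖ ^ p := fun x => by positivity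
  have ha_s := ha.mono_set Set.subset_union_left
  have ha_t := ha.mono_set Set.subset_union_right
  set I := ∫ x in s, ‖f x - a‖ ^ p ∂μ
  set J := ∫ x in t, ‖f x - b‖ ^ p ∂μ
  have : 0 ≤ I := integral_nonneg (nonneg a)
  have J_nonneg : 0 ≤ J := integral_nonneg (nonneg b)
  set c : ℝ := 2 ^ (p - 1)
  have const_close : ‖b - a‖ ^ p ≤ c * (I + J) / μ.real (s ∩ t) := by
    rw [le_div_iff₀ hst, norm_sub_rev]
    exact norm_sub_rpow_mul_measureReal_inter_le hp ha_s hb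
  calc ∫ x in s ∪ t, ‖f x - a‖ ^ p ∂μ
      ≤ I + ∫ x in t, ‖f x - a‖ ^ p ∂μ := setIntegral_union_le (nonneg a) ha_s ha_t
    _ ≤ I + c * (J + ‖b - a‖ ^ p * μ.real t) := by
        gcongr
        simpa using integral_norm_sub_const_rpow_le hp b a hb
    _ ≤ I + c * (J + c * (I + J) / μ.real (s ∩ t) * μ.real t) := by gcongr
    _ = I + c * J + c * (c * (μ.real t / μ.real (s ∩ t))) * (I + J) := by ring
    _ ≤ _ := by
        have : 0 ≤ c * I := by positivity
        linarith

lemma abs_integral_mul_rpow_le [IsFiniteMeasure μ] (hp : 1 ≤ p) {f φ : α → ℝ} {M : ℝ}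
    (hM : 0 ≤ M) (hf : Integrable f μ) (hfp : Integrable (fun x => |f x| ^ p) μ)
    (hφM : ∀ᵐ x ∂μ, ‖φ x‖ ≤ M) :
    |∫ x, f x * φ x ∂μ| ^ p ≤ M ^ p * (μ.real Set.univ ^ (p - 1) * ∫ x, |f x| ^ p ∂μ) := by
  have abs_le : |∫ x, f x * φ x ∂μ| ≤ M * ∫ x, |f x| ∂μ := by
    rw [← integral_const_mul, ← Real.norm_eq_abs]
    refine norm_integral_le_of_norm_le (hf.abs.const_mul M) (hφM.mono fun x hx => ?_)
    rw [norm_mul, mul_comm]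
    exact mul_le_mul_of_nonneg_right hx (norm_nonneg _)
  calc |∫ x, f x * φ x ∂μ| ^ p
      ≤ (M * ∫ x, |f x| ∂μ) ^ p := by gcongr
    _ = M ^ p * (∫ x, |f x| ∂μ) ^ p :=
        Real.mul_rpow hM (integral_nonneg fun _ => abs_nonneg _)
    _ ≤ _ := by
        gcongr
        exact rpow_integral_norm_le hp hf hfp

lemma abs_const_rpow_mul_abs_integral_rpow_le [IsFiniteMeasure μ] (hp : 1 ≤ p) {f φ : α → ℝ}
    {m M : ℝ} (hM : 0 ≤ M) (hf : Integrable (fun x => f x - m) μ)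
    (hfp : Integrable (fun x => |f x - m| ^ p) μ) (hφ : AEStronglyMeasurable φ μ)
    (hφM : ∀ᵐ x ∂μ, ‖φ x‖ ≤ M) :
    |m| ^ p * |∫ x, φ x ∂μ| ^ p ≤ 2 ^ (p - 1) *
      (|∫ x, f x * φ x ∂μ| ^ p +
        M ^ p * (μ.real Set.univ ^ (p - 1) * ∫ x, |f x - m| ^ p ∂μ)) := by
  have fφ_int : Integrable (fun x => (f x - m) * φ x) μ := hf.mul_bdd hφ hφM
  have φ_int : Integrable φ μ := Integrable.of_bound hφ M hφM
  have split : m * ∫ x, φ x ∂μ = (∫ x, f x * φ x ∂μ) + -∫ x, (f x - m) * φ x ∂μ := by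
    have : ∫ x, f x * φ x ∂μ = (∫ x, (f x - m) * φ x ∂μ) + ∫ x, m * φ x ∂μ := by
      rw [← integral_add fφ_int (φ_int.const_mul m)]
      simp only [sub_mul, sub_add_cancel]
    rw [this, integral_const_mul]
    ring
  rw [← Real.mul_rpow (abs_nonneg _) (abs_nonneg _), ← abs_mul, split]
  refine (norm_add_rpow_le hp (∫ x, f x * φ x ∂μ) (-∫ x, (f x - m) * φ x ∂μ)).trans ?_
  rw [norm_neg, Real.norm_eq_abs, Real.norm_eq_abs]
  gcongr
  exact abs_integral_mul_rpow_le hp hM hf hfp hφM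

lemma exists_integral_abs_rpow_le_add_abs_integral [IsFiniteMeasure μ] (hp : 1 ≤ p) {φ : α → ℝ}
    {M : ℝ} (hM : 0 ≤ M) (hφ : AEStronglyMeasurable φ μ) (hφM : ∀ᵐ x ∂μ, ‖φ x‖ ≤ M)
    (hφ₀ : ∫ x, φ x ∂μ ≠ 0) :
    ∃ C > 0, ∀ (f : α → ℝ) (m : ℝ), Integrable (fun x => f x - m) μ →
      Integrable (fun x => |f x - m| ^ p) μ →
        ∫ x, |f x| ^ p ∂μ ≤ C * ((∫ x, |f x - m| ^ p ∂μ) + |∫ x, f x * φ x ∂μ| ^ p) := by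
  set P := |∫ x, φ x ∂μ| ^ p
  have P_pos : 0 < P := Real.rpow_pos_of_pos (abs_pos.2 hφ₀) p
  set q : ℝ := 2 ^ (p - 1)
  set N := M ^ p * μ.real Set.univ ^ (p - 1)
  set κ := μ.real Set.univ / P
  refine ⟨q * (1 + κ * q * (N + 1)), by positivity, fun f m hf hfp => ?_⟩
  set I := ∫ x, |f x - m| ^ p ∂μ
  set G := |∫ x, f x * φ x ∂μ| ^ p
  have mean_le : |m| ^ p * P ≤ q * (G + N * I) := by
    simpa only [← mul_assoc] using abs_const_rpow_mul_abs_integral_rpow_le hp hM hf hfp hφ hφM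
  calc ∫ x, |f x| ^ p ∂μ
      ≤ q * (I + |m| ^ p * μ.real Set.univ) := by
        simpa using integral_norm_sub_const_rpow_le hp m 0 hfp
    _ = q * (I + κ * (|m| ^ p * P)) := by rw [mul_left_comm, div_mul_cancel₀ _ P_pos.ne']
    _ ≤ q * (I + κ * (q * (G + N * I))) := by gcongr
    _ ≤ q * (I + κ * (q * (G + N * I)) + (G + κ * q * (I + N * G))) :=
        mul_le_mul_of_nonneg_left (le_add_of_nonneg_right (by positivity)) (by positivity)
    _ = q * (1 + κ * q * (N + 1)) * (I + G) := by ring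

end MeanOscillation

lemma lintegral_lintegral_add_smul_eq {E : Type*} [NormedAddCommGroup E] [NormedSpace ℝ E]
    [MeasurableSpace E] [BorelSpace E] [SecondCountableTopology E] {μ : Measure E} [SFinite μ]
    [μ.IsAddRightInvariant] {ν : Measure ℝ} [IsProbabilityMeasure ν] {g : E → ENNReal}
    (hg : Measurable g) (S : Set E) :
    ∫⁻ a, ∫⁻ h in S, ∫⁻ t, g (a + t • h) ∂ν ∂μ ∂μ = μ S * ∫⁻ x, g x ∂μ := by
  have meas : Measurable fun q : (E × E) × ℝ => g (q.1.1 + q.2 • q.1.2) := hg.comp (by fun_prop)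
  rw [lintegral_lintegral_swap meas.lintegral_prod_right'.aemeasurable]
  have average (h : E) : ∫⁻ a, ∫⁻ t, g (a + t • h) ∂ν ∂μ = ∫⁻ x, g x ∂μ := by
    have meas_h : Measurable fun q : E × ℝ => g (q.1 + q.2 • h) := hg.comp (by fun_prop)
    rw [lintegral_lintegral_swap meas_h.aemeasurable]
    simp [lintegral_add_right_eq_self g]
  simp [average, mul_comm]

section Poincare

variable {E : Type*} [NormedAddCommGroup E] [InnerProductSpace ℝ E] {p : ℝ} {A B K : Set E}
  {w : E → ℝ}

lemma abs_sub_rpow_le_setIntegral_norm_gradient [CompleteSpace E] (hp : 1 ≤ p)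
    (hw : ContDiff ℝ 1 w) (a h : E) :
    |w (a + h) - w a| ^ p ≤ ‖h‖ ^ p * ∫ t in Set.Icc (0 : ℝ) 1, ‖gradient w (a + t • h)‖ ^ p := by
  have hp₀ : 0 ≤ p := zero_le_one.trans hp
  have line_cont : Continuous fun t : ℝ => a + t • h := by fun_prop
  have grad_cont : Continuous fun t : ℝ => gradient w (a + t • h) :=
    (continuous_gradient hw).comp line_cont
  have deriv (t : ℝ) :
      HasDerivAt (fun t : ℝ => w (a + t • h)) ⟪gradient w (a + t • h), h⟫ t := by
    have line : HasDerivAt (fun t : ℝ => a + t • h) h t := by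
      simpa using ((hasDerivAt_id t).smul_const h).const_add a
    exact (hasGradientAt_of_contDiff hw (a + t • h)).hasFDerivAt.comp_hasDerivAt t line
  have increment : |w (a + h) - w a| ≤
      ‖h‖ * ∫ t in Set.Icc (0 : ℝ) 1, ‖gradient w (a + t • h)‖ := by
    have ftc := intervalIntegral.integral_eq_sub_of_hasDerivAt (a := 0) (b := 1)
      (fun t _ => deriv t) ((grad_cont.inner continuous_const).intervalIntegrable 0 1)
    simp only [one_smul, zero_smul, add_zero] at ftc
    rw [← ftc, intervalIntegral.integral_of_le zero_le_one, ← integral_Icc_eq_integral_Ioc,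
      ← integral_const_mul]
    exact norm_integral_le_of_norm_le
      ((grad_cont.norm.const_mul ‖h‖).continuousOn.integrableOn_compact isCompact_Icc)
      (Eventually.of_forall fun t => (norm_inner_le_norm (𝕜 := ℝ) _ _).trans_eq (mul_comm _ _))
  have jensen := rpow_integral_norm_le (μ := volume.restrict (Set.Icc (0 : ℝ) 1)) hp
    (grad_cont.continuousOn.integrableOn_compact isCompact_Icc)
    ((grad_cont.norm.rpow_const fun _ => Or.inr hp₀).continuousOn.integrableOn_compact
      isCompact_Icc)
  calc |w (a + h) - w a| ^ p
      ≤ (‖h‖ * ∫ t in Set.Icc (0 : ℝ) 1, ‖gradient w (a + t • h)‖) ^ p := by gcongr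
    _ = ‖h‖ ^ p * (∫ t in Set.Icc (0 : ℝ) 1, ‖gradient w (a + t • h)‖) ^ p :=
        Real.mul_rpow (norm_nonneg _) (integral_nonneg fun _ => norm_nonneg _)
    _ ≤ _ := by
        gcongr
        simpa using jensen

lemma ofReal_abs_sub_rpow_le_lintegral_indicator [CompleteSpace E] (hp : 1 ≤ p) (hA : Convex ℝ A)
    (hAb : Bornology.IsBounded A) (hw : ContDiff ℝ 1 w) {a z : E} (ha : a ∈ A) (hz : z ∈ A) :
    ENNReal.ofReal (|w z - w a| ^ p) ≤ ENNReal.ofReal (Metric.diam A ^ p) *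
      ∫⁻ t in Set.Icc (0 : ℝ) 1,
        A.indicator (fun x => ENNReal.ofReal (‖gradient w x‖ ^ p)) (a + t • (z - a)) := by
  have line_cont : Continuous fun t : ℝ => a + t • (z - a) := by fun_prop
  have grad_int : IntegrableOn (fun t : ℝ => ‖gradient w (a + t • (z - a))‖ ^ p) (Set.Icc 0 1) :=
    ((((continuous_gradient hw).comp line_cont).norm.rpow_const
      fun _ => Or.inr (zero_le_one.trans hp)).continuousOn.integrableOn_compact isCompact_Icc)
  have on_segment : ∫⁻ t in Set.Icc (0 : ℝ) 1,
      A.indicator (fun x => ENNReal.ofReal (‖gradient w x‖ ^ p)) (a + t • (z - a)) =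
        ENNReal.ofReal (∫ t in Set.Icc (0 : ℝ) 1, ‖gradient w (a + t • (z - a))‖ ^ p) := by
    rw [ofReal_integral_eq_lintegral_ofReal grad_int
      (Eventually.of_forall fun t => Real.rpow_nonneg (norm_nonneg _) p)]
    exact setLIntegral_congr_fun measurableSet_Icc fun t ht =>
      Set.indicator_of_mem (hA.add_smul_sub_mem ha hz ht) _
  rw [on_segment, ← ENNReal.ofReal_mul (by positivity)]
  refine ENNReal.ofReal_le_ofReal ?_
  calc |w z - w a| ^ p
      ≤ ‖z - a‖ ^ p * ∫ t in Set.Icc (0 : ℝ) 1, ‖gradient w (a + t • (z - a))‖ ^ p := by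
        simpa using abs_sub_rpow_le_setIntegral_norm_gradient hp hw a (z - a)
    _ ≤ _ := by
        gcongr
        rw [← dist_eq_norm]
        exact Metric.dist_le_diam_of_mem hAb hz ha

variable [FiniteDimensional ℝ E] [MeasurableSpace E] [BorelSpace E]

/-- Sets supporting a `(p, p)`-Poincaré inequality for `C¹` functions, up to an unspecified
additive constant. -/
def IsPoincareSet (p : ℝ) (A : Set E) : Prop :=
  ∃ C ≥ 0, ∀ w : E → ℝ, ContDiff ℝ 1 w → ∃ m : ℝ,
    ∫ x in A, |w x - m| ^ p ≤ C * ∫ x in A, ‖gradient w x‖ ^ p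

lemma setLIntegral_setLIntegral_abs_sub_rpow_le (hp : 1 ≤ p) (hA : Convex ℝ A) (hAc : IsCompact A)
    (hw : ContDiff ℝ 1 w) :
    ∫⁻ a in A, ∫⁻ z in A, ENNReal.ofReal (|w z - w a| ^ p) ≤
      ENNReal.ofReal (Metric.diam A ^ p) * (volume (Metric.closedBall (0 : E) (Metric.diam A)) *
        ∫⁻ x in A, ENNReal.ofReal (‖gradient w x‖ ^ p)) := by
  set c := ENNReal.ofReal (Metric.diam A ^ p)
  set S := Metric.closedBall (0 : E) (Metric.diam A)
  set g : E → ENNReal := A.indicator fun x => ENNReal.ofReal (‖gradient w x‖ ^ p)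
  have hg : Measurable g := ((continuous_gradient hw).norm.rpow_const
    fun _ => Or.inr (zero_le_one.trans hp)).measurable.ennreal_ofReal.indicator hAc.measurableSet
  have mean_meas : Measurable fun q : E × E => ∫⁻ t in Set.Icc (0 : ℝ) 1, g (q.1 + t • q.2) :=
    (hg.comp (by fun_prop : Measurable fun q : (E × E) × ℝ =>
      q.1.1 + q.2 • q.1.2)).lintegral_prod_right'
  have mean_meas_left (a : E) : Measurable fun h => ∫⁻ t in Set.Icc (0 : ℝ) 1, g (a + t • h) :=
    mean_meas.comp measurable_prodMk_left
  have : IsProbabilityMeasure (volume.restrict (Set.Icc (0 : ℝ) 1)) := ⟨by simp⟩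
  have inner_le : ∀ a ∈ A, ∫⁻ z in A, ENNReal.ofReal (|w z - w a| ^ p) ≤
      c * ∫⁻ h in S, ∫⁻ t in Set.Icc (0 : ℝ) 1, g (a + t • h) := by
    intro a ha
    have sub_mem : A ⊆ (· - a) ⁻¹' S := fun z hz => by
      rw [Set.mem_preimage, mem_closedBall_zero_iff, ← dist_eq_norm]
      exact Metric.dist_le_diam_of_mem hAc.isBounded hz ha
    calc ∫⁻ z in A, ENNReal.ofReal (|w z - w a| ^ p)
        ≤ ∫⁻ z in A, c * ∫⁻ t in Set.Icc (0 : ℝ) 1, g (a + t • (z - a)) :=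
          setLIntegral_mono' hAc.measurableSet fun z hz =>
            ofReal_abs_sub_rpow_le_lintegral_indicator hp hA hAc.isBounded hw ha hz
      _ ≤ ∫⁻ z in (· - a) ⁻¹' S, c * ∫⁻ t in Set.Icc (0 : ℝ) 1, g (a + t • (z - a)) :=
          lintegral_mono_set sub_mem
      _ = _ := by
          rw [(measurePreserving_sub_right volume a).setLIntegral_comp_preimage
            Metric.isClosed_closedBall.measurableSet
            ((mean_meas_left a).const_mul c), lintegral_const_mul _ (mean_meas_left a)]
  calc ∫⁻ a in A, ∫⁻ z in A, ENNReal.ofReal (|w z - w a| ^ p)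
      ≤ ∫⁻ a, c * ∫⁻ h in S, ∫⁻ t in Set.Icc (0 : ℝ) 1, g (a + t • h) :=
        (setLIntegral_mono' hAc.measurableSet inner_le).trans (setLIntegral_le_lintegral _ _)
    _ = _ := by
        rw [lintegral_const_mul _ mean_meas.lintegral_prod_right',
          lintegral_lintegral_add_smul_eq hg, lintegral_indicator hAc.measurableSet]

lemma integrableOn_norm_rpow_of_continuous {F : Type*} [NormedAddCommGroup F] (hp : 0 ≤ p)
    (hA : IsCompact A) {f : E → F} (hf : Continuous f) : IntegrableOn (fun x => ‖f x‖ ^ p) A :=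
  (hf.norm.rpow_const fun _ => Or.inr hp).continuousOn.integrableOn_compact hA

lemma isPoincareSet_of_convex (hp : 1 ≤ p) (hA : Convex ℝ A) (hAc : IsCompact A) :
    IsPoincareSet p A := by
  rcases eq_or_ne (volume A) 0 with hA₀ | hA₀
  · exact ⟨0, le_rfl, fun w _ => ⟨0, by simp [Measure.restrict_eq_zero.2 hA₀]⟩⟩
  have hp₀ : 0 ≤ p := zero_le_one.trans hp
  have hA_top : volume A ≠ ⊤ := hAc.measure_lt_top.ne
  have hA_pos : 0 < volume.real A := ENNReal.toReal_pos hA₀ hA_top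
  set D := Metric.diam A
  set β := volume.real (Metric.closedBall (0 : E) D)
  refine ⟨D ^ p * β / volume.real A, by positivity, fun w hw => ?_⟩
  have osc_int (a : E) : IntegrableOn (fun z => |w z - w a| ^ p) A :=
    integrableOn_norm_rpow_of_continuous hp₀ hAc (hw.continuous.sub continuous_const)
  have grad_int : IntegrableOn (fun x => ‖gradient w x‖ ^ p) A :=
    integrableOn_norm_rpow_of_continuous hp₀ hAc (continuous_gradient hw)
  have osc_cont : Continuous fun q : E × E => |w q.2 - w q.1| ^ p :=
    ((hw.continuous.comp continuous_snd).sub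
      (hw.continuous.comp continuous_fst)).abs.rpow_const fun _ => Or.inr hp₀
  have osc_meas : Measurable fun a => ∫⁻ z in A, ENNReal.ofReal (|w z - w a| ^ p) :=
    osc_cont.measurable.ennreal_ofReal.lintegral_prod_right'
  obtain ⟨a, -, ha⟩ := exists_le_setLAverage hA₀ hA_top osc_meas.aemeasurable
  refine ⟨w a, ?_⟩
  rw [setLAverage_eq, ENNReal.le_div_iff_mul_le (Or.inl hA₀) (Or.inl hA_top)] at ha
  have double := ha.trans (setLIntegral_setLIntegral_abs_sub_rpow_le hp hA hAc hw)
  rw [← ofReal_integral_eq_lintegral_ofReal (osc_int a)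
      (Eventually.of_forall fun _ => by positivity),
    ← ofReal_integral_eq_lintegral_ofReal grad_int
      (Eventually.of_forall fun _ => by positivity)] at double
  have double_real := ENNReal.toReal_mono (ENNReal.mul_ne_top ENNReal.ofReal_ne_top
    (ENNReal.mul_ne_top measure_closedBall_lt_top.ne ENNReal.ofReal_ne_top)) double
  simp only [ENNReal.toReal_mul, ENNReal.toReal_ofReal (show 0 ≤ Metric.diam A ^ p by positivity),
    ENNReal.toReal_ofReal (setIntegral_nonneg hAc.measurableSet fun x _ =>
      Real.rpow_nonneg (abs_nonneg (w x - w a)) p),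
    ENNReal.toReal_ofReal (setIntegral_nonneg hAc.measurableSet fun x _ =>
      Real.rpow_nonneg (norm_nonneg (gradient w x)) p)] at double_real
  rw [div_mul_eq_mul_div, le_div_iff₀ hA_pos, mul_assoc]
  exact double_real

lemma IsPoincareSet.union (hp : 1 ≤ p) (hA : IsPoincareSet p A) (hB : IsPoincareSet p B)
    (hAc : IsCompact A) (hBc : IsCompact B) (hAB : 0 < volume (A ∩ B)) :
    IsPoincareSet p (A ∪ B) := by
  obtain ⟨C_A, hC_A, poincare_A⟩ := hA
  obtain ⟨C_B, hC_B, poincare_B⟩ := hB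
  have hp₀ : 0 ≤ p := zero_le_one.trans hp
  have overlap_pos : 0 < volume.real (A ∩ B) :=
    ENNReal.toReal_pos hAB.ne' (hAc.inter hBc).measure_lt_top.ne
  set κ : ℝ :=
    1 + 2 ^ (p - 1) + 2 ^ (p - 1) * (2 ^ (p - 1) * (volume.real B / volume.real (A ∩ B)))
  refine ⟨κ * (C_A + C_B), by positivity, fun w hw => ?_⟩
  obtain ⟨a, ha⟩ := poincare_A w hw
  obtain ⟨b, hb⟩ := poincare_B w hw
  refine ⟨a, ?_⟩
  have grad_le {S : Set E} (hS : S ⊆ A ∪ B) :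
      ∫ x in S, ‖gradient w x‖ ^ p ≤ ∫ x in A ∪ B, ‖gradient w x‖ ^ p :=
    setIntegral_mono_set
      (integrableOn_norm_rpow_of_continuous hp₀ (hAc.union hBc) (continuous_gradient hw))
      (Eventually.of_forall fun x => by positivity) hS.eventuallyLE
  calc ∫ x in A ∪ B, |w x - a| ^ p
      ≤ κ * ((∫ x in A, |w x - a| ^ p) + ∫ x in B, |w x - b| ^ p) :=
        setIntegral_union_norm_sub_const_rpow_le hp overlap_pos hBc.measure_lt_top.ne
          (integrableOn_norm_rpow_of_continuous hp₀ (hAc.union hBc)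
            (hw.continuous.sub continuous_const))
          (integrableOn_norm_rpow_of_continuous hp₀ hBc (hw.continuous.sub continuous_const))
    _ ≤ κ * (C_A * (∫ x in A, ‖gradient w x‖ ^ p) + C_B * ∫ x in B, ‖gradient w x‖ ^ p) := by
        gcongr
    _ ≤ κ * (C_A * (∫ x in A ∪ B, ‖gradient w x‖ ^ p) +
          C_B * ∫ x in A ∪ B, ‖gradient w x‖ ^ p) := by
        gcongr ?_ * (_ * ?_ + _ * ?_)
        · exact grad_le Set.subset_union_left
        · exact grad_le Set.subset_union_right
    _ = _ := by ring

lemma exists_isCompact_isPoincareSet (hp : 1 ≤ p) {Ω : Set E} (hΩo : IsOpen Ω)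
    (hΩc : IsPreconnected Ω) {x y : E} (hx : x ∈ Ω) (hy : y ∈ Ω) :
    ∃ A ⊆ Ω, IsCompact A ∧ IsPoincareSet p A ∧ x ∈ interior A ∧ y ∈ interior A := by
  refine hΩc.induction₂ (fun x y => ∃ A ⊆ Ω, IsCompact A ∧ IsPoincareSet p A ∧
    x ∈ interior A ∧ y ∈ interior A) ?_ ?_ ?_ hx hy
  · intro x hx
    obtain ⟨r, hr, hball⟩ := Metric.nhds_basis_closedBall.mem_iff.1 (hΩo.mem_nhds hx)
    have poincare : IsPoincareSet p (Metric.closedBall x r) :=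
      isPoincareSet_of_convex hp (convex_closedBall x r) (isCompact_closedBall x r)
    filter_upwards [mem_nhdsWithin_of_mem_nhds (Metric.ball_mem_nhds x hr)] with y hy
    exact ⟨_, hball, isCompact_closedBall x r, poincare,
      Metric.ball_subset_interior_closedBall (Metric.mem_ball_self hr),
      Metric.ball_subset_interior_closedBall hy⟩
  · rintro x y z - - - ⟨A, hAΩ, hAc, hA, hxA, hyA⟩ ⟨B, hBΩ, hBc, hB, hyB, hzB⟩
    have overlap : 0 < volume (A ∩ B) :=
      Measure.measure_pos_of_mem_nhds volume (inter_mem (mem_interior_iff_mem_nhds.1 hyA)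
        (mem_interior_iff_mem_nhds.1 hyB))
    exact ⟨A ∪ B, Set.union_subset hAΩ hBΩ, hAc.union hBc, hA.union hp hB hAc hBc overlap,
      interior_mono Set.subset_union_left hxA, interior_mono Set.subset_union_right hzB⟩
  · rintro x y - - ⟨A, hAΩ, hAc, hA, hxA, hyA⟩
    exact ⟨A, hAΩ, hAc, hA, hyA, hxA⟩

lemma exists_isPoincareSet_superset (hp : 1 ≤ p) {Ω : Set E} (hΩo : IsOpen Ω)
    (hΩc : IsConnected Ω) (hK : IsCompact K) (hKΩ : K ⊆ Ω) :
    ∃ A, K ⊆ A ∧ A ⊆ Ω ∧ IsCompact A ∧ IsPoincareSet p A := by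
  obtain ⟨x₀, hx₀⟩ := hΩc.nonempty
  suffices ∃ A, K ⊆ A ∧ A ⊆ Ω ∧ IsCompact A ∧ IsPoincareSet p A ∧ x₀ ∈ interior A by
    obtain ⟨A, hKA, hAΩ, hAc, hA, -⟩ := this
    exact ⟨A, hKA, hAΩ, hAc, hA⟩
  refine hK.induction_on ?_ ?_ ?_ ?_
  · obtain ⟨A, hAΩ, hAc, hA, hx₀A, -⟩ :=
      exists_isCompact_isPoincareSet hp hΩo hΩc.isPreconnected hx₀ hx₀
    exact ⟨A, Set.empty_subset A, hAΩ, hAc, hA, hx₀A⟩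
  · rintro S T hST ⟨A, hTA, hA⟩
    exact ⟨A, hST.trans hTA, hA⟩
  · rintro S T ⟨A, hSA, hAΩ, hAc, hA, hx₀A⟩ ⟨B, hTB, hBΩ, hBc, hB, hx₀B⟩
    have overlap : 0 < volume (A ∩ B) :=
      Measure.measure_pos_of_mem_nhds volume (inter_mem (mem_interior_iff_mem_nhds.1 hx₀A)
        (mem_interior_iff_mem_nhds.1 hx₀B))
    exact ⟨A ∪ B, Set.union_subset_union hSA hTB, Set.union_subset hAΩ hBΩ, hAc.union hBc,
      hA.union hp hB hAc hBc overlap, interior_mono Set.subset_union_left hx₀A⟩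
  · intro y hy
    obtain ⟨A, hAΩ, hAc, hA, hx₀A, hyA⟩ :=
      exists_isCompact_isPoincareSet hp hΩo hΩc.isPreconnected hx₀ (hKΩ hy)
    exact ⟨A, mem_nhdsWithin_of_mem_nhds (mem_interior_iff_mem_nhds.1 hyA), A, subset_rfl, hAΩ,
      hAc, hA, hx₀A⟩

lemma IsPoincareSet.exists_setIntegral_rpow_le (hp : 1 ≤ p) (hA : IsPoincareSet p A)
    (hAc : IsCompact A) {φ : E → ℝ} (hφ : ContinuousOn φ A) (hφ₀ : ∫ x in A, φ x ≠ 0) :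
    ∃ C > 0, ∀ w : E → ℝ, ContDiff ℝ 1 w →
      ∫ x in A, |w x| ^ p ≤
        C * ((∫ x in A, ‖gradient w x‖ ^ p) + |∫ x in A, w x * φ x| ^ p) := by
  obtain ⟨C, hC, poincare⟩ := hA
  obtain ⟨M, hM⟩ := hAc.exists_bound_of_continuousOn hφ
  have : IsFiniteMeasure (volume.restrict A) :=
    isFiniteMeasure_restrict.2 hAc.measure_lt_top.ne
  obtain ⟨D, hD, rpow_le⟩ := exists_integral_abs_rpow_le_add_abs_integral hp (le_max_right M 0)
    (hφ.aestronglyMeasurable hAc.measurableSet)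
    (ae_restrict_of_forall_mem hAc.measurableSet fun x hx => (hM x hx).trans (le_max_left M 0)) hφ₀
  refine ⟨D * (C + 1), by positivity, fun w hw => ?_⟩
  obtain ⟨m, hm⟩ := poincare w hw
  have osc_cont : Continuous fun x => w x - m := hw.continuous.sub continuous_const
  set G := ∫ x in A, ‖gradient w x‖ ^ p
  set F := |∫ x in A, w x * φ x| ^ p
  have : 0 ≤ G := integral_nonneg fun x => by positivity
  calc ∫ x in A, |w x| ^ p
      ≤ D * ((∫ x in A, |w x - m| ^ p) + F) :=
        rpow_le w m (osc_cont.continuousOn.integrableOn_compact hAc)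
          (integrableOn_norm_rpow_of_continuous (zero_le_one.trans hp) hAc osc_cont)
    _ ≤ D * (C * G + F) := by gcongr
    _ ≤ D * (C * G + F + (G + C * F)) :=
        mul_le_mul_of_nonneg_left (le_add_of_nonneg_right (by positivity)) hD.le
    _ = D * (C + 1) * (G + F) := by ring

end Poincare

/-! ### Estimates on compact sets -/

section LocalEstimate

variable {d : ℕ} {Ω A K : Set (Euc d)} {V v : Euc d → ℝ} {p : ℝ}

lemma IsPositiveSupersolution.energyQ_mul_nonneg (hv : IsPositiveSupersolution Ω V p v)
    (hΩ : IsOpen Ω) (hp : 1 < p) (hV : LocBddPotential Ω V) {w : Euc d → ℝ}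
    (hw : IsC1TestFun Ω w) : 0 ≤ energyQ Ω V p fun x => w x * v x := by
  simpa using hv.setIntegral_convexityDefect_le hΩ hp hV hw (Set.empty_subset Ω)

lemma IsPositiveSupersolution.exists_setIntegral_rpow_le_of_isPoincareSet
    (hv : IsPositiveSupersolution Ω V p v) (hΩ : IsOpen Ω) (hp : 1 < p)
    (hV : LocBddPotential Ω V) (hA : IsPoincareSet p A) (hAc : IsCompact A) (hAΩ : A ⊆ Ω)
    {φ : Euc d → ℝ} (hφ : ContinuousOn φ A) (hφ₀ : ∫ x in A, φ x ≠ 0) :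
    ∃ C > 0, ∀ w, IsC1TestFun Ω w → ∫ x in A, |w x| ^ p ≤
      C * (energyQ Ω V p (fun x => w x * v x) + |∫ x in A, w x * φ x| ^ p) := by
  obtain ⟨B, hB, poincare⟩ := hA.exists_setIntegral_rpow_le hp.le hAc hφ hφ₀
  obtain ⟨D, hD, gradient_le⟩ := hv.exists_setIntegral_norm_gradient_rpow_le hΩ hp hV hAc hAΩ
    (ε := (2 * B)⁻¹) (by positivity)
  refine ⟨2 * B * (D + 1), by positivity, fun w hw => ?_⟩
  have energy_nonneg := hv.energyQ_mul_nonneg hΩ hp hV hw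
  set I := ∫ x in A, |w x| ^ p
  set Q := energyQ Ω V p fun x => w x * v x
  set F := |∫ x in A, w x * φ x| ^ p
  have absorb : I ≤ B * (D * Q + F) + I / 2 := calc
    I ≤ B * ((∫ x in A, ‖gradient w x‖ ^ p) + F) := poincare w hw.1
    _ ≤ B * (D * Q + (2 * B)⁻¹ * I + F) := by gcongr; exact gradient_le w hw
    _ = B * (D * Q + F) + I / 2 := by field_simp; ring
  calc I ≤ 2 * B * (D * Q + F) := by linarith
    _ ≤ 2 * B * (D * Q + F + (Q + D * F)) :=
        mul_le_mul_of_nonneg_left (le_add_of_nonneg_right (by positivity)) (by positivity)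
    _ = 2 * B * (D + 1) * (Q + F) := by ring

lemma IsTestFun.isC1TestFun_div {u : Euc d → ℝ} (hu : IsTestFun Ω u) (hΩ : IsOpen Ω)
    (hv : ContDiffOn ℝ 1 v Ω) (hv₀ : ∀ x ∈ Ω, v x ≠ 0) : IsC1TestFun Ω fun x => u x / v x := by
  simpa only [div_eq_mul_inv, Pi.inv_apply] using hu.isC1TestFun.mul_contDiffOn hΩ (hv.inv hv₀)

lemma IsTestFun.div_mul_cancel {u : Euc d → ℝ} (hu : IsTestFun Ω u) (hv₀ : ∀ x ∈ Ω, v x ≠ 0)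
    (x : Euc d) : u x / v x * v x = u x := by
  by_cases hx : x ∈ Ω
  · exact div_mul_cancel₀ _ (hv₀ x hx)
  · simp [image_eq_zero_of_notMem_tsupport fun h => hx (hu.2.2 h)]

lemma setIntegral_abs_rpow_le_of_abs_le_mul (hp : 0 ≤ p) (hA : IsCompact A) (hKA : K ⊆ A)
    {f g : Euc d → ℝ} (hf : Continuous f) (hg : Continuous g) {M : ℝ} (hM : 0 ≤ M)
    (hfg : ∀ x ∈ A, |f x| ≤ M * |g x|) :
    ∫ x in K, |f x| ^ p ≤ M ^ p * ∫ x in A, |g x| ^ p := by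
  have f_int : IntegrableOn (fun x => |f x| ^ p) A := integrableOn_norm_rpow_of_continuous hp hA hf
  have g_int : IntegrableOn (fun x => |g x| ^ p) A := integrableOn_norm_rpow_of_continuous hp hA hg
  calc ∫ x in K, |f x| ^ p
      ≤ ∫ x in A, |f x| ^ p :=
        setIntegral_mono_set f_int (Eventually.of_forall fun x => by positivity) hKA.eventuallyLE
    _ ≤ ∫ x in A, M ^ p * |g x| ^ p :=
        setIntegral_mono_on f_int (g_int.const_mul _) hA.measurableSet fun x hx => by
          rw [← Real.mul_rpow hM (abs_nonneg _)]
          gcongr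
          exact hfg x hx
    _ = _ := integral_const_mul _ _

lemma IsPositiveSupersolution.exists_setIntegral_rpow_le (hv : IsPositiveSupersolution Ω V p v)
    (hΩo : IsOpen Ω) (hΩc : IsConnected Ω) (hp : 1 < p) (hV : LocBddPotential Ω V)
    (hK : IsCompact K) (hKΩ : K ⊆ Ω) {ψ : Euc d → ℝ} (hψ : IsTestFun Ω ψ)
    (hψv : ∫ x in Ω, ψ x * v x ≠ 0) :
    ∃ C > 0, ∀ u, IsTestFun Ω u →
      ∫ x in K, |u x| ^ p ≤ C * (energyQ Ω V p u + |∫ x in Ω, u x * ψ x| ^ p) := by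
  obtain ⟨A, hA, hAΩ, hAc, poincare⟩ := exists_isPoincareSet_superset hp.le hΩo hΩc
    (hK.union hψ.2.1) (Set.union_subset hKΩ hψ.2.2)
  obtain ⟨hKA, hψA⟩ := Set.union_subset_iff.1 hA
  have on_A (f : Euc d → ℝ) : ∫ x in A, f x * ψ x = ∫ x in Ω, f x * ψ x :=
    (setIntegral_eq_of_subset_of_forall_sdiff_eq_zero hΩo.measurableSet hAΩ fun x hx => by
      rw [image_eq_zero_of_notMem_tsupport fun h => hx.2 (hψA h), mul_zero]).symm
  have hvA : ContinuousOn v A := hv.1.continuousOn.mono hAΩ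
  obtain ⟨C, hC, estimate⟩ := hv.exists_setIntegral_rpow_le_of_isPoincareSet hΩo hp hV poincare
    hAc hAΩ (φ := fun x => v x * ψ x) (hvA.mul hψ.1.continuous.continuousOn)
    (by rw [on_A]; simpa only [mul_comm] using hψv)
  obtain ⟨M, hM⟩ := hAc.exists_bound_of_continuousOn hvA
  refine ⟨(max M 1) ^ p * C, by positivity, fun u hu => ?_⟩
  have v_ne : ∀ x ∈ Ω, v x ≠ 0 := fun x hx => (hv.2.1 x hx).ne'
  have hw := hu.isC1TestFun_div hΩo hv.1 v_ne
  have u_eq := hu.div_mul_cancel v_ne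
  have quotient := estimate _ hw
  simp only [← mul_assoc, u_eq, on_A] at quotient
  have u_le (x : Euc d) (hx : x ∈ A) : |u x| ≤ max M 1 * |u x / v x| := calc
    |u x| = |v x| * |u x / v x| := by rw [← abs_mul, mul_comm, u_eq]
    _ ≤ max M 1 * |u x / v x| := by
        gcongr
        exact (hM x hx).trans (le_max_left M 1)
  calc ∫ x in K, |u x| ^ p
      ≤ (max M 1) ^ p * ∫ x in A, |u x / v x| ^ p :=
        setIntegral_abs_rpow_le_of_abs_le_mul (zero_le_one.trans hp.le) hAc hKA hu.1.continuous
          hw.1.continuous (by positivity) u_le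
    _ ≤ (max M 1) ^ p * (C * (energyQ Ω V p u + |∫ x in Ω, u x * ψ x| ^ p)) := by gcongr
    _ = _ := (mul_assoc _ _ _).symm

end LocalEstimate

/-! ### The weight -/

section Weight

lemma integral_tsum_le_of_hasSum {α : Type*} [MeasurableSpace α] {μ : Measure α}
    {f : ℕ → α → ℝ} {b : ℕ → ℝ} {s : ℝ} (hf₀ : ∀ n x, 0 ≤ f n x)
    (hf : ∀ n, Integrable (f n) μ) (hb : HasSum b s) (hfb : ∀ n, ∫ x, f n x ∂μ ≤ b n) :
    ∫ x, ∑' n, f n x ∂μ ≤ s := by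
  have summable_norm : Summable fun n => ∫ x, ‖f n x‖ ∂μ := by
    simp only [Real.norm_of_nonneg (hf₀ _ _)]
    exact Summable.of_nonneg_of_le (fun n => integral_nonneg (hf₀ n)) hfb hb.summable
  exact hasSum_le hfb (hasSum_integral_of_summable_integral_norm hf summable_norm) hb

lemma setIntegral_mul_le_setIntegral_tsupport {X : Type*} [TopologicalSpace X] [MeasurableSpace X]
    [OpensMeasurableSpace X] {μ : Measure X} {Ω : Set X} (hΩ : MeasurableSet Ω) {χ f : X → ℝ}
    (hχ : Continuous χ) (hχ₀ : 0 ≤ χ) (hχ₁ : χ ≤ 1) (hχΩ : tsupport χ ⊆ Ω) (hf₀ : 0 ≤ f)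
    (hf : IntegrableOn f Ω μ) : ∫ x in Ω, χ x * f x ∂μ ≤ ∫ x in tsupport χ, f x ∂μ := by
  have prod_int : IntegrableOn (fun x => χ x * f x) Ω μ :=
    hf.bdd_mul (c := 1) hχ.measurable.aestronglyMeasurable (Eventually.of_forall fun x => by
      rw [Real.norm_of_nonneg (hχ₀ x)]
      exact hχ₁ x)
  rw [setIntegral_eq_of_subset_of_forall_sdiff_eq_zero hΩ hχΩ fun x hx => by
    rw [image_eq_zero_of_notMem_tsupport hx.2, zero_mul]]
  exact integral_mono (prod_int.mono_set hχΩ) (hf.mono_set hχΩ)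
    fun x => mul_le_of_le_one_left (hf₀ x) (hχ₁ x)

lemma exists_cutoff_seq {X : Type*} [TopologicalSpace X] [R1Space X] [LocallyCompactSpace X]
    {Ω : Set X} (hΩo : IsOpen Ω) (hΩσ : IsSigmaCompact Ω) :
    ∃ χ : ℕ → X → ℝ, (∀ n, Continuous (χ n)) ∧ (∀ n x, χ n x ∈ Set.Icc 0 1) ∧
      (∀ n, HasCompactSupport (χ n)) ∧ (∀ n, tsupport (χ n) ⊆ Ω) ∧ ∀ x ∈ Ω, ∃ n, χ n x = 1 := by
  obtain ⟨K, hKc, hKΩ⟩ := hΩσ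
  choose χ χ_one χ_compact χ_supp χ_mem using fun n =>
    exists_continuousMap_one_of_isCompact_subset_isOpen (hKc n) hΩo
      ((Set.subset_iUnion K n).trans hKΩ.subset)
  refine ⟨fun n => χ n, fun n => (χ n).continuous, χ_mem, χ_compact, χ_supp, fun x hx => ?_⟩
  obtain ⟨n, hn⟩ := Set.mem_iUnion.1 (hKΩ.symm ▸ hx)
  exact ⟨n, χ_one n hn⟩

lemma exists_continuous_weight {X ι : Type*} [TopologicalSpace X] [R1Space X]
    [LocallyCompactSpace X] [MeasurableSpace X] [OpensMeasurableSpace X] {μ : Measure X}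
    {Ω : Set X} (hΩo : IsOpen Ω) (hΩσ : IsSigmaCompact Ω) {f : ι → X → ℝ} {N : ι → ℝ}
    (hf₀ : ∀ i, 0 ≤ f i) (hf : ∀ i, IntegrableOn (f i) Ω μ)
    (hfN : ∀ K ⊆ Ω, IsCompact K → ∃ C > 0, ∀ i, ∫ x in K, f i x ∂μ ≤ C * N i) :
    ∃ W : X → ℝ, Continuous W ∧ (∀ x ∈ Ω, 0 < W x) ∧
      ∀ i, ∫ x in Ω, W x * f i x ∂μ ≤ N i := by
  obtain ⟨χ, χ_cont, χ_mem, χ_compact, χ_supp, χ_one⟩ := exists_cutoff_seq hΩo hΩσ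
  choose C hC local_le using fun n => hfN _ (χ_supp n) (χ_compact n)
  set c : ℕ → ℝ := fun n => 1 / 2 / 2 ^ n * min 1 (C n)⁻¹
  have c_pos (n : ℕ) : 0 < c n := mul_pos (by positivity) (lt_min one_pos (inv_pos.2 (hC n)))
  have c_le (n : ℕ) : c n ≤ 1 / 2 / 2 ^ n :=
    mul_le_of_le_one_right (by positivity) (min_le_left _ _)
  have summand_nonneg (n : ℕ) (x : X) : 0 ≤ c n * χ n x := mul_nonneg (c_pos n).le (χ_mem n x).1
  have norm_le (n : ℕ) (x : X) : ‖c n * χ n x‖ ≤ 1 / 2 / 2 ^ n := by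
    rw [Real.norm_of_nonneg (summand_nonneg n x)]
    exact (mul_le_of_le_one_right (c_pos n).le (χ_mem n x).2).trans (c_le n)
  refine ⟨fun x => ∑' n, c n * χ n x,
    continuous_tsum (fun n => (χ_cont n).const_mul _) (summable_geometric_two' 1) norm_le,
    fun x hx => ?_, fun i => ?_⟩
  · obtain ⟨n, hn⟩ := χ_one x hx
    refine (Summable.of_norm_bounded (summable_geometric_two' 1) fun n => norm_le n x).tsum_pos
      (fun n => summand_nonneg n x) n ?_
    simpa [hn] using c_pos n
  have hN : 0 ≤ N i :=
    nonneg_of_mul_nonneg_right ((integral_nonneg (hf₀ i)).trans (local_le 0 i)) (hC 0)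
  simp only [← tsum_mul_right]
  refine integral_tsum_le_of_hasSum (b := fun n => 1 / 2 / 2 ^ n * N i)
    (fun n x => mul_nonneg (summand_nonneg n x) (hf₀ i x))
    (fun n => (hf i).bdd_mul ((χ_cont n).const_mul _).measurable.aestronglyMeasurable
      (Eventually.of_forall (norm_le n)))
    (by simpa using (hasSum_geometric_two' 1).mul_right (N i)) fun n => ?_
  simp only [mul_assoc, integral_const_mul]
  calc c n * ∫ x in Ω, χ n x * f i x ∂μ
      ≤ c n * (C n * N i) := mul_le_mul_of_nonneg_left
        ((setIntegral_mul_le_setIntegral_tsupport hΩo.measurableSet (χ_cont n)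
          (fun x => (χ_mem n x).1) (fun x => (χ_mem n x).2) (χ_supp n) (hf₀ i) (hf i)).trans
          (local_le n i)) (c_pos n).le
    _ ≤ 1 / 2 / 2 ^ n * (C n)⁻¹ * (C n * N i) :=
        mul_le_mul_of_nonneg_right (mul_le_mul_of_nonneg_left (min_le_right _ _) (by positivity))
          (mul_nonneg (hC n).le hN)
    _ = 1 / 2 / 2 ^ n * N i := by
        have := (hC n).ne'
        field_simp

end Weight

section PoincareType

variable {d : ℕ} {Ω : Set (Euc d)} {V v : Euc d → ℝ} {p : ℝ}

lemma exists_isTestFun_setIntegral_mul_ne_zero (hΩo : IsOpen Ω) (hΩ : Ω.Nonempty)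
    (hv : ContinuousOn v Ω) (hv₀ : ∀ x ∈ Ω, 0 < v x) :
    ∃ ψ, IsTestFun Ω ψ ∧ ∫ x in Ω, ψ x * v x ≠ 0 := by
  obtain ⟨a, ha⟩ := hΩ
  obtain ⟨χ, hχ, χ_mem, χ_one⟩ := exists_isTestFun_eventually_eq_one hΩo isCompact_singleton
    (Set.singleton_subset_iff.2 ha)
  have supp : tsupport (fun x => χ x * v x) ⊆ tsupport χ := tsupport_mul_subset_left
  have cont : Continuous fun x => χ x * v x :=
    (hχ.1.continuous.continuousOn.mul hv).continuous_of_tsupport_subset hΩo (supp.trans hχ.2.2)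
  have zero_off (x : Euc d) (hx : x ∉ Ω) : χ x * v x = 0 := by
    rw [image_eq_zero_of_notMem_tsupport fun h => hx (hχ.2.2 h), zero_mul]
  refine ⟨χ, hχ, ?_⟩
  rw [setIntegral_eq_integral_of_forall_compl_eq_zero zero_off]
  refine (cont.integral_pos_of_hasCompactSupport_nonneg_nonzero (x := a)
    hχ.2.1.mul_right (fun x => ?_) ?_).ne'
  · by_cases hx : x ∈ Ω
    · exact mul_nonneg (χ_mem x).1 (hv₀ x hx).le
    · exact (zero_off x hx).ge
  · rw [χ_one.self_of_nhdsSet a rfl, one_mul]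
    exact (hv₀ a ha).ne'

lemma IsTestFun.exists_abs_setIntegral_mul_rpow_le (hΩ : MeasurableSet Ω) (hp : 1 ≤ p)
    {ψ : Euc d → ℝ} (hψ : IsTestFun Ω ψ) :
    ∃ C ≥ 0, ∀ u : Euc d → ℝ, Continuous u →
      |∫ x in Ω, u x * ψ x| ^ p ≤ C * ∫ x in tsupport ψ, |u x| ^ p := by
  obtain ⟨M, hM⟩ := hψ.2.1.exists_bound_of_continuous hψ.1.continuous
  have : Fact (volume (tsupport ψ) < ⊤) := ⟨hψ.2.1.isCompact.measure_lt_top⟩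
  have hM₀ : 0 ≤ M := (norm_nonneg _).trans (hM 0)
  refine ⟨M ^ p * volume.real (tsupport ψ) ^ (p - 1), by positivity, fun u hu => ?_⟩
  rw [setIntegral_eq_of_subset_of_forall_sdiff_eq_zero hΩ hψ.2.2 fun x hx => by
    rw [image_eq_zero_of_notMem_tsupport hx.2, mul_zero]]
  simpa [mul_assoc] using abs_integral_mul_rpow_le hp hM₀
    (hu.continuousOn.integrableOn_compact hψ.2.1)
    (integrableOn_norm_rpow_of_continuous (zero_le_one.trans hp) hψ.2.1 hu)
    (Eventually.of_forall hM)

lemma IsPositiveSupersolution.energyQ_nonneg (hv : IsPositiveSupersolution Ω V p v)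
    (hΩ : IsOpen Ω) (hp : 1 < p) (hV : LocBddPotential Ω V) {u : Euc d → ℝ}
    (hu : IsTestFun Ω u) : 0 ≤ energyQ Ω V p u := by
  have v_ne : ∀ x ∈ Ω, v x ≠ 0 := fun x hx => (hv.2.1 x hx).ne'
  simpa only [hu.div_mul_cancel v_ne] using
    hv.energyQ_mul_nonneg hΩ hp hV (hu.isC1TestFun_div hΩ hv.1 v_ne)

lemma IsPositiveSupersolution.exists_weight (hv : IsPositiveSupersolution Ω V p v)
    (hΩo : IsOpen Ω) (hΩc : IsConnected Ω) (hp : 1 < p) (hV : LocBddPotential Ω V)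
    {ψ : Euc d → ℝ} (hψ : IsTestFun Ω ψ) (hψv : ∫ x in Ω, ψ x * v x ≠ 0) :
    ∃ W : Euc d → ℝ, Continuous W ∧ (∀ x ∈ Ω, 0 < W x) ∧ ∀ u, IsTestFun Ω u →
      ∫ x in Ω, W x * |u x| ^ p ≤ energyQ Ω V p u + |∫ x in Ω, u x * ψ x| ^ p := by
  have p_pos : 0 < p := zero_lt_one.trans hp
  have hΩσ : IsSigmaCompact Ω :=
    have := hΩo.locallyCompactSpace
    isSigmaCompact_iff_sigmaCompactSpace.2 inferInstance
  have integrable (u : {u // IsTestFun Ω u}) : Integrable fun x => |u.1 x| ^ p :=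
    (u.2.1.continuous.abs.rpow_const fun _ => Or.inr p_pos.le).integrable_of_hasCompactSupport
      (u.2.2.1.comp_left (g := fun t => |t| ^ p) (by simp [p_pos.ne']))
  obtain ⟨W, hW, W_pos, weighted⟩ := exists_continuous_weight (ι := {u // IsTestFun Ω u})
    (μ := volume) hΩo hΩσ (f := fun u x => |u.1 x| ^ p)
    (N := fun u => energyQ Ω V p u + |∫ x in Ω, u.1 x * ψ x| ^ p)
    (fun u x => by positivity) (fun u => (integrable u).integrableOn)
    fun K hKΩ hK => by
      simpa using hv.exists_setIntegral_rpow_le hΩo hΩc hp hV hK hKΩ hψ hψv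
  exact ⟨W, hW, W_pos, fun u hu => weighted ⟨u, hu⟩⟩

theorem poincare_type_inequality_general (hΩo : IsOpen Ω) (hΩc : IsConnected Ω)
    (hp : 1 < p) (hV : LocBddPotential Ω V) (hv : IsPositiveSupersolution Ω V p v) :
    ∃ W : Euc d → ℝ, ContinuousOn W Ω ∧ (∀ x ∈ Ω, 0 < W x) ∧
      ∀ ψ : Euc d → ℝ, IsTestFun Ω ψ → (∫ x in Ω, ψ x * v x) ≠ 0 →
        ∃ C : ℝ, 0 < C ∧ ∀ u : Euc d → ℝ, IsTestFun Ω u →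
          C⁻¹ * ∫ x in Ω, W x * |u x| ^ p ≤
            energyQ Ω V p u + C * |∫ x in Ω, u x * ψ x| ^ p := by
  obtain ⟨ψ₀, hψ₀, hψ₀v⟩ := exists_isTestFun_setIntegral_mul_ne_zero hΩo hΩc.nonempty
    hv.1.continuousOn hv.2.1
  obtain ⟨W, hW, W_pos, weighted⟩ := hv.exists_weight hΩo hΩc hp hV hψ₀ hψ₀v
  obtain ⟨B, hB, functional_le⟩ :=
    hψ₀.exists_abs_setIntegral_mul_rpow_le hΩo.measurableSet hp.le
  refine ⟨W, hW.continuousOn, W_pos, fun ψ hψ hψv => ?_⟩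
  obtain ⟨C, hC, local_le⟩ :=
    hv.exists_setIntegral_rpow_le hΩo hΩc hp hV hψ₀.2.1 hψ₀.2.2 hψ hψv
  refine ⟨1 + B * C, by positivity, fun u hu => ?_⟩
  have energy_nonneg := hv.energyQ_nonneg hΩo hp hV hu
  set Q := energyQ Ω V p u
  set F := |∫ x in Ω, u x * ψ x| ^ p
  have F_nonneg : 0 ≤ F := by positivity
  rw [inv_mul_le_iff₀ (by positivity)]
  calc ∫ x in Ω, W x * |u x| ^ p
      ≤ Q + |∫ x in Ω, u x * ψ₀ x| ^ p := weighted u hu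
    _ ≤ Q + B * (C * (Q + F)) := by
        gcongr
        exact (functional_le u hu.1.continuous).trans (by gcongr; exact local_le u hu)
    _ ≤ Q + B * (C * (Q + F)) + F := le_add_of_nonneg_right F_nonneg
    _ = (1 + B * C) * (Q + 1 * F) := by ring
    _ ≤ (1 + B * C) * (Q + (1 + B * C) * F) := by
        gcongr
        exact le_add_of_nonneg_right (by positivity)

end PoincareType

/-- **Poincaré-type inequality.** If `Q ≥ 0` admits a ground state `v`, then there is a
positive continuous weight `W` on `Ω` such that for every test function `ψ` with
`∫ ψ v ≠ 0` there is `C > 0` with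
`C⁻¹ ∫ W |u|^p ≤ Q(u) + C |∫ u ψ|^p` for all test functions `u`. -/
theorem poincare_type_inequality {d : ℕ} (hd : 2 ≤ d)
    (Ω : Set (Euc d)) (hΩo : IsOpen Ω) (hΩc : IsConnected Ω)
    {p : ℝ} (hp₁ : 1 < p) (V : Euc d → ℝ) (hV : LocBddPotential Ω V)
    (hQ : ∀ u : Euc d → ℝ, IsTestFun Ω u → 0 ≤ energyQ Ω V p u)
    (v : Euc d → ℝ) (hv : IsGroundState Ω V p v) :
    ∃ W : Euc d → ℝ, ContinuousOn W Ω ∧ (∀ x ∈ Ω, 0 < W x) ∧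
      ∀ ψ : Euc d → ℝ, IsTestFun Ω ψ → (∫ x in Ω, ψ x * v x) ≠ 0 →
        ∃ C : ℝ, 0 < C ∧
          ∀ u : Euc d → ℝ, IsTestFun Ω u →
            C⁻¹ * ∫ x in Ω, W x * |u x| ^ p ≤
              energyQ Ω V p u + C * |∫ x in Ω, u x * ψ x| ^ p :=
  poincare_type_inequality_general hΩo hΩc hp₁ hV
    (hv.isPositiveSolution hΩo hp₁ hV hQ).isPositiveSupersolution
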